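/- arXiv:1005.1306 — 2 statements merged into one kernel-verified Lean document; each statement's English description precedes it below -/
import Mathlib

section
/- Let n and j be positive integers with 4j ≤ n − 1, and let M be distributed according to the Haar probability measure on SO(n,ℝ). Then E[Tr(M^{2j})] = 1 and Var(Tr(M^{2j})) = 2j. -/
open MeasureTheory ProbabilityTheory Matrix

/-- Matrices over a measurable space of entries carry the product σ-algebra
(the Borel σ-algebra, for matrices over `ℝ` or `ℂ`). -/
instance matrixMeasurableSpace {m n α : Type*} [MeasurableSpace α] :
    MeasurableSpace (Matrix m n α) :=
  inferInstanceAs (MeasurableSpace (m → n → α))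

/-- The special orthogonal group `SO(n,ℝ)`: real orthogonal `n × n` matrices of
determinant `1`, as a subgroup of the orthogonal group. -/
def SO (n : ℕ) : Subgroup (Matrix.orthogonalGroup (Fin n) ℝ) where
  carrier := {M | Matrix.det (M : Matrix (Fin n) (Fin n) ℝ) = 1}
  mul_mem' := by
    intro a b ha hb
    simp only [Set.mem_setOf_eq, Matrix.UnitaryGroup.mul_val, Matrix.det_mul] at *
    rw [ha, hb, mul_one]
  one_mem' := by
    simp only [Set.mem_setOf_eq, Matrix.UnitaryGroup.one_val, Matrix.det_one]
  inv_mem' := by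
    intro a ha
    simp only [Set.mem_setOf_eq, Matrix.UnitaryGroup.inv_val] at *
    rw [Matrix.star_eq_conjTranspose, Matrix.det_conjTranspose, ha, star_one]

/-- The trace of the `k`-th power (`k : ℤ`, negative powers via the inverse) of an
element of `SO(n,ℝ)`. -/
noncomputable def trSO {n : ℕ} (M : SO n) (k : ℤ) : ℝ :=
  Matrix.trace (((M ^ k : SO n) : Matrix.orthogonalGroup (Fin n) ℝ) :
    Matrix (Fin n) (Fin n) ℝ)

/-- The standard normal cumulative distribution function
`Φ(x₀) = (1/√(2π)) ∫_{-∞}^{x₀} e^{-x²/2} dx`. -/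
noncomputable def Phi (x₀ : ℝ) : ℝ :=
  (Real.sqrt (2 * Real.pi))⁻¹ * ∫ x in Set.Iic x₀, Real.exp (-x ^ 2 / 2)

/-!
Write `p_k = Tr (M ^ k)`. Integrating the derivative of `Tr (X M ^ k) g(p)` along `t ↦ exp (t X) M`
over `SO(n,ℝ)` gives `0`. Summed over the elementary skew matrices `X` this becomes
`E[L_k g] = 0` for a first-order differential operator `L_k` on polynomials in the power sums, which
raises the weight by at most `k` when `p_l` is given weight `l`.

These equations determine the moments of weight less than `n`: they express `(n - 1) E[p_k u]`, up
to moments of lower weight, as a signed sum of `N - 1` moments of the same weight `N = k + |u|`, so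
two solutions with the same total mass agree by a contraction argument.

Independent Gaussian variables `p_k` of variance `k` and mean `1` or `0`, according to the parity
of `k`, also solve them. Indeed, by Gaussian integration by parts and the commutators of `L_k` with
`p_m` and `∂/∂p_m`, the functional `g ↦ E[L_k g]` satisfies the identities which characterise
the Gaussian expectation up to a scalar, and the scalar is `E[L_k 1] = 0`. Hence all joint moments
of weight less than `n` are exactly Gaussian.
-/

section LoopOperator

open MvPolynomial

variable {R : Type*} [CommRing R]

/-- The zeroth-order part `∑ i ∈ [1, k], (p_{|k - 2i|} - p_i p_{k - i})` of the loop operator, a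
polynomial in the power sums `p_l = Tr(M ^ l)`, which are encoded as the variables `X l`. -/
noncomputable def loopDrift (k : ℕ) : MvPolynomial ℕ R :=
  ∑ i ∈ Finset.Icc 1 k, (X (Nat.dist k (2 * i)) - X i * X (k - i))

/-- The first-order part of the loop operator: the derivation
`p_l ↦ l (p_{|k - l|} - p_{k + l})` of the polynomial ring in the power sums. -/
noncomputable def loopDerivation (k : ℕ) : Derivation R (MvPolynomial ℕ R) (MvPolynomial ℕ R) :=
  mkDerivation R fun l => (l : R) • (X (Nat.dist k l) - X (k + l))

/-- The loop operator of index `k`: it sends a polynomial `g` in the power sums to the divergence on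
the orthogonal group of the vector field `g ∇p_k / k`, again written in the power sums. -/
noncomputable def loopOperator (k : ℕ) : MvPolynomial ℕ R →ₗ[R] MvPolynomial ℕ R :=
  LinearMap.mulLeft R (loopDrift k) + (loopDerivation k).toLinearMap

lemma loopOperator_apply (k : ℕ) (g : MvPolynomial ℕ R) :
    loopOperator k g = loopDrift k * g + loopDerivation k g := rfl

lemma loopDerivation_X (k l : ℕ) :
    loopDerivation k (X l : MvPolynomial ℕ R) = (l : R) • (X (Nat.dist k l) - X (k + l)) :=
  mkDerivation_X ..

lemma loopDerivation_monomial (k : ℕ) (u : ℕ →₀ ℕ) :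
    loopDerivation k (monomial u (1 : R)) = ∑ l ∈ u.support, ((u l * l : ℕ) : R) •
      (monomial (u - Finsupp.single l 1 + Finsupp.single (Nat.dist k l) 1) 1 -
        monomial (u - Finsupp.single l 1 + Finsupp.single (k + l) 1) 1) := by
  rw [loopDerivation, mkDerivation_monomial, one_smul, Finsupp.sum]
  refine Finset.sum_congr rfl fun l _ => ?_
  simp only [X, smul_eq_mul, mul_sub, monomial_mul, smul_sub, smul_monomial, Nat.cast_mul, mul_one]

lemma loopOperator_one (k : ℕ) : loopOperator k (1 : MvPolynomial ℕ R) = loopDrift k := by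
  rw [loopOperator_apply, mul_one, Derivation.map_one_eq_zero, add_zero]

lemma loopOperator_X_mul (k m : ℕ) (g : MvPolynomial ℕ R) :
    loopOperator k (X m * g) =
      X m * loopOperator k g + (m : R) • ((X (Nat.dist k m) - X (k + m)) * g) := by
  simp only [loopOperator_apply, Derivation.leibniz, loopDerivation_X, smul_eq_mul,
    Algebra.smul_def]
  ring

lemma pderiv_X_eq_ite (m l : ℕ) :
    pderiv m (X l : MvPolynomial ℕ R) = if l = m then 1 else 0 := by
  rw [pderiv_X, Pi.single_apply]

lemma natCast_mul_ite_dist_sub_ite_add {m : ℕ} (hm : 0 < m) (k l : ℕ) :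
    (l : R) * ((if Nat.dist k l = m then 1 else 0) - if k + l = m then 1 else 0) =
      (k + m) * (if l = k + m then 1 else 0) + (k - m) * if l = Nat.dist k m then 1 else 0 := by
  obtain rfl | hk := Nat.eq_zero_or_pos k
  · rw [Nat.dist_zero_left, Nat.dist_zero_left, zero_add, zero_add, Nat.cast_zero]
    ring
  obtain rfl | hl := Nat.eq_zero_or_pos l
  · have cast_eq (h : 0 = Nat.dist k m) : (k : R) - m = 0 := by
      rw [Nat.eq_of_dist_eq_zero h.symm, sub_self]
    rw [Nat.cast_zero, zero_mul, if_neg (by omega), mul_zero, zero_add, mul_ite, mul_one, mul_zero]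
    exact (ite_eq_right_iff.2 cast_eq).symm
  obtain ⟨d, rfl⟩ | ⟨d, rfl⟩ := (le_total m k).imp exists_add_of_le exists_add_of_le
  · have dist_eq : Nat.dist (m + d) m = d := by unfold Nat.dist; omega
    have dist_eq_iff : Nat.dist (m + d) l = m ↔ l = m + d + m ∨ l = d := by
      unfold Nat.dist; omega
    simp only [dist_eq, dist_eq_iff]
    split_ifs <;> first | omega | (subst_vars; push_cast; ring1)
  · have dist_eq : Nat.dist k (k + d) = d := by unfold Nat.dist; omega
    have dist_eq_iff : Nat.dist k l = k + d ↔ l = k + (k + d) := by unfold Nat.dist; omega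
    simp only [dist_eq, dist_eq_iff, Nat.add_left_cancel_iff]
    split_ifs <;> first | omega | (subst_vars; push_cast; ring1)

lemma commutator_pderiv_loopDerivation {m : ℕ} (hm : 0 < m) (k : ℕ) :
    ⁅pderiv (R := R) m, loopDerivation k⁆ =
      ((k : R) + m) • pderiv (R := R) (k + m) + ((k : R) - m) • pderiv (R := R) (Nat.dist k m) := by
  refine derivation_ext fun l => ?_
  have derivation_ite : loopDerivation k (if l = m then 1 else 0 : MvPolynomial ℕ R) = 0 := by
    split_ifs <;> simp
  have coeff_eq := congrArg (C : R → MvPolynomial ℕ R) (natCast_mul_ite_dist_sub_ite_add hm k l)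
  simp only [map_mul, map_add, map_sub, apply_ite C, C_1, C_0] at coeff_eq
  simp only [Derivation.commutator_apply, loopDerivation_X, Derivation.map_smul, map_sub,
    pderiv_X_eq_ite, Derivation.add_apply, Derivation.smul_apply, derivation_ite, sub_zero]
  simpa only [smul_eq_C_mul, map_add, map_sub] using coeff_eq

lemma card_filter_dist_two_mul_eq {k m : ℕ} (hm : 0 < m) (hmk : m < k) :
    ((Finset.Icc 1 k).filter fun i => Nat.dist k (2 * i) = m).card =
      if Even (k - m) then 2 else 0 := by
  split_ifs with heven
  · obtain ⟨r, hr⟩ := heven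
    have : (Finset.Icc 1 k).filter (fun i => Nat.dist k (2 * i) = m) = {r, r + m} := by
      ext i
      rw [Finset.mem_filter, Finset.mem_Icc, Finset.mem_insert, Finset.mem_singleton, Nat.dist]
      omega
    rw [this, Finset.card_pair (by omega)]
  · rw [Nat.even_iff] at heven
    refine Finset.card_eq_zero.2 (Finset.filter_eq_empty_iff.2 fun i _ => ?_)
    unfold Nat.dist
    omega

lemma pderiv_loopDrift {m : ℕ} (hm : 0 < m) (k : ℕ) :
    pderiv m (loopDrift k : MvPolynomial ℕ R) =
      C ((((Finset.Icc 1 k).filter fun i => Nat.dist k (2 * i) = m).card : ℕ) : R)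
        - (if m < k then X (k - m) else 0) - (if m ≤ k then X (k - m) else 0) := by
  have sum_left : ∑ i ∈ Finset.Icc 1 k, (if k - i = m then X i else 0 : MvPolynomial ℕ R) =
      if m < k then X (k - m) else 0 := by
    split_ifs with hmk
    · rw [Finset.sum_eq_single_of_mem (k - m) (by rw [Finset.mem_Icc]; omega), if_pos (by omega)]
      intro i hi hne
      rw [Finset.mem_Icc] at hi
      exact if_neg (by omega)
    · refine Finset.sum_eq_zero fun i hi => if_neg ?_
      rw [Finset.mem_Icc] at hi
      omega
  have sum_right : ∑ i ∈ Finset.Icc 1 k, (if i = m then X (k - i) else 0 : MvPolynomial ℕ R) =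
      if m ≤ k then X (k - m) else 0 := by
    rw [Finset.sum_ite_eq']
    exact if_congr (by rw [Finset.mem_Icc]; omega) rfl rfl
  simp only [loopDrift, map_sum, map_sub, Derivation.leibniz, pderiv_X_eq_ite, smul_eq_mul,
    mul_ite, mul_one, mul_zero, Finset.sum_sub_distrib, Finset.sum_add_distrib, sum_left, sum_right,
    Finset.sum_boole, map_natCast, sub_sub]

end LoopOperator

section GaussianFunctional

open MvPolynomial

variable {σ R : Type*} [CommRing R]

/-- The moments of a Gaussian variable of mean `a` and variance `c`, by their three-term recursion,
which makes sense over any commutative ring. -/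
def gaussianMoment (a c : R) : ℕ → R
  | 0 => 1
  | 1 => a
  | m + 2 => a * gaussianMoment a c (m + 1) + c * (m + 1) * gaussianMoment a c m

lemma gaussianMoment_succ (a c : R) (m : ℕ) :
    gaussianMoment a c (m + 1) = a * gaussianMoment a c m + c * m * gaussianMoment a c (m - 1) := by
  cases m <;> simp [gaussianMoment]

/-- The expectation of a polynomial in independent Gaussian variables of means `a i` and variances
`c i`. -/
noncomputable def gaussianFunctional (a c : σ → R) : MvPolynomial σ R →ₗ[R] R :=
  (basisMonomials σ R).constr R fun s => s.prod fun i m => gaussianMoment (a i) (c i) m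

lemma gaussianFunctional_monomial (a c : σ → R) (s : σ →₀ ℕ) (r : R) :
    gaussianFunctional a c (monomial s r) =
      r * s.prod fun i m => gaussianMoment (a i) (c i) m := by
  have monomial_eq : monomial s r = r • basisMonomials σ R s := by
    rw [coe_basisMonomials, smul_monomial, smul_eq_mul, mul_one]
  rw [monomial_eq, map_smul, gaussianFunctional, Module.Basis.constr_basis, smul_eq_mul]

lemma gaussianFunctional_one (a c : σ → R) : gaussianFunctional a c 1 = 1 := by
  simpa using gaussianFunctional_monomial a c 0 1

lemma gaussianFunctional_X_mul (a c : σ → R) (i : σ) (g : MvPolynomial σ R) :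
    gaussianFunctional a c (X i * g) =
      a i * gaussianFunctional a c g + c i * gaussianFunctional a c (pderiv i g) := by
  classical
  induction g using MvPolynomial.induction_on' with
  | add p q hp hq => simp only [mul_add, map_add, hp, hq]; ring
  | monomial s r =>
    have split_moment {t : σ →₀ ℕ} (ht : t.erase i = s.erase i) :
        (t.prod fun l m => gaussianMoment (a l) (c l) m) = gaussianMoment (a i) (c i) (t i) *
          (s.erase i).prod fun l m => gaussianMoment (a l) (c l) m := by
      rw [← ht, Finsupp.mul_prod_erase' t i (fun l m => gaussianMoment (a l) (c l) m) fun _ => rfl]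
    have erase_add : (Finsupp.single i 1 + s).erase i = s.erase i := by
      rw [Finsupp.erase_add, Finsupp.erase_single, zero_add]
    have erase_sub : (s - Finsupp.single i 1).erase i = s.erase i := by
      ext l
      by_cases h : l = i <;> simp [h]
    rw [← pow_one (X i), ← monomial_single_add, pderiv_monomial]
    simp only [gaussianFunctional_monomial, split_moment rfl, split_moment erase_add,
      split_moment erase_sub, Finsupp.add_apply, Finsupp.single_eq_same, Finsupp.tsub_apply,
      add_comm 1, gaussianMoment_succ]
    ring

lemma eq_smul_gaussianFunctional {a c : σ → R} {D : MvPolynomial σ R →ₗ[R] R}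
    (hD : ∀ i g, D (X i * g) = a i * D g + c i * D (pderiv i g)) :
    D = D 1 • gaussianFunctional a c := by
  suffices on_monomial : ∀ s r, D (monomial s r) = D 1 * gaussianFunctional a c (monomial s r) by
    refine LinearMap.ext fun g => ?_
    induction g using MvPolynomial.induction_on' with
    | monomial s r => exact on_monomial s r
    | add p q hp hq => rw [map_add, map_add, hp, hq]
  intro s
  induction s using WellFoundedLT.induction with
  | ind s ih =>
    intro r
    obtain rfl | hs := eq_or_ne s 0
    · rw [← C_apply, C_eq_smul_one, map_smul, map_smul, gaussianFunctional_one, smul_eq_mul,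
        smul_eq_mul, mul_one, mul_comm]
    obtain ⟨i, hi⟩ := Finsupp.ne_iff.1 hs
    obtain ⟨u, rfl⟩ := exists_add_of_le (Finsupp.single_le_iff.2 (Nat.one_le_iff_ne_zero.2 hi))
    have lt_add : u < Finsupp.single i 1 + u := by simp [pos_iff_ne_zero]
    rw [monomial_single_add, pow_one, hD, gaussianFunctional_X_mul, pderiv_monomial, ih u lt_add,
      ih _ (tsub_le_self.trans_lt lt_add)]
    ring

end GaussianFunctional

section GaussianTraces

open MvPolynomial

variable {R : Type*} [CommRing R]

/-- The limiting mean of `Tr (M ^ k)` for `M` in the orthogonal group of size `n`. -/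
def traceMean (n : R) (k : ℕ) : R :=
  if k = 0 then n else if Even k then 1 else 0

/-- The expectation of a polynomial in independent Gaussian variables `p_k` with the limiting means
of the power sums and variances `k`; in particular `p_0` is the constant `n`. -/
noncomputable def gaussianTraces (n : R) : MvPolynomial ℕ R →ₗ[R] R :=
  gaussianFunctional (traceMean n) Nat.cast

lemma traceMean_zero (n : R) : traceMean n 0 = n := if_pos rfl

lemma traceMean_of_pos (n : R) {k : ℕ} (hk : 0 < k) :
    traceMean n k = if Even k then 1 else 0 := if_neg hk.ne'

lemma traceMean_of_even (n : R) {k : ℕ} (hk : Even k) :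
    traceMean n k = 1 + if k = 0 then n - 1 else 0 := by
  rw [traceMean, if_pos hk]
  split_ifs <;> ring

lemma traceMean_of_not_even (n : R) {k : ℕ} (hk : ¬Even k) : traceMean n k = 0 := by
  rw [traceMean, if_neg (by rintro rfl; exact hk Even.zero), if_neg hk]

lemma gaussianTraces_X_mul (n : R) (m : ℕ) (g : MvPolynomial ℕ R) :
    gaussianTraces n (X m * g) =
      traceMean n m * gaussianTraces n g + m * gaussianTraces n (pderiv m g) :=
  gaussianFunctional_X_mul ..

lemma traceMean_add_eq (n : R) {k m : ℕ} (hkm : k ≠ m) (hm : 0 < m) :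
    traceMean n (k + m) = traceMean n (Nat.dist k m) := by
  have even_iff : Even (k + m) ↔ Even (Nat.dist k m) := by
    unfold Nat.dist
    grind
  rw [traceMean_of_pos n (by omega), traceMean_of_pos n (Nat.dist_pos_of_ne hkm),
    if_congr even_iff rfl rfl]

lemma gaussianTraces_pderiv_loopDrift_mul (n : R) {m : ℕ} (hm : 0 < m) (k : ℕ)
    (g : MvPolynomial ℕ R) :
    gaussianTraces n (pderiv m (loopDrift k) * g) =
      -((traceMean n (Nat.dist k m) - traceMean n (k + m)) * gaussianTraces n g +
        ((Nat.dist k m : R) + (k - m)) * gaussianTraces n (pderiv (Nat.dist k m) g)) := by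
  rw [pderiv_loopDrift hm]
  obtain hkm | rfl | hmk := lt_trichotomy k m
  · have card_eq : ((Finset.Icc 1 k).filter fun i => Nat.dist k (2 * i) = m).card = 0 := by
      refine Finset.card_eq_zero.2 (Finset.filter_eq_empty_iff.2 fun i hi => ?_)
      rw [Finset.mem_Icc] at hi
      unfold Nat.dist
      omega
    rw [card_eq, if_neg (by omega), if_neg (by omega), traceMean_add_eq n hkm.ne hm,
      Nat.dist_eq_sub_of_le hkm.le, Nat.cast_sub hkm.le]
    simp
  · have card_eq : ((Finset.Icc 1 k).filter fun i => Nat.dist k (2 * i) = k).card = 1 := by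
      refine Finset.card_eq_one.2 ⟨k, Finset.ext fun i => ?_⟩
      rw [Finset.mem_filter, Finset.mem_Icc, Finset.mem_singleton, Nat.dist]
      omega
    rw [card_eq, if_neg (lt_irrefl k), if_pos le_rfl, Nat.sub_self, Nat.dist_self, sub_zero,
      Nat.cast_one, C_1, sub_mul, one_mul, map_sub, gaussianTraces_X_mul, traceMean_zero,
      traceMean_of_pos n (by omega), if_pos (Even.add_self k), Nat.cast_zero]
    ring
  · have mean_eq : traceMean n (Nat.dist k m) + traceMean n (k + m) =
        ((if Even (k - m) then 2 else 0 : ℕ) : R) := by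
      rw [traceMean_add_eq n hmk.ne' hm, Nat.dist_eq_sub_of_le_right hmk.le,
        traceMean_of_pos n (by omega)]
      split_ifs <;> norm_num
    rw [card_filter_dist_two_mul_eq hm hmk, if_pos hmk, if_pos hmk.le, ← mean_eq, sub_mul, sub_mul,
      map_sub, map_sub, gaussianTraces_X_mul, ← smul_eq_C_mul, map_smul, smul_eq_mul,
      Nat.dist_eq_sub_of_le_right hmk.le, Nat.cast_sub hmk.le]
    ring

lemma gaussianTraces_loopOperator_X_mul (n : R) (k m : ℕ) (g : MvPolynomial ℕ R) :
    gaussianTraces n (loopOperator k (X m * g)) =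
      traceMean n m * gaussianTraces n (loopOperator k g) +
        m * gaussianTraces n (loopOperator k (pderiv m g)) := by
  obtain rfl | hm := Nat.eq_zero_or_pos m
  · rw [loopOperator_X_mul, Nat.cast_zero, zero_smul, zero_mul, add_zero, add_zero,
      gaussianTraces_X_mul, Nat.cast_zero, zero_mul, add_zero]
  have pderiv_derivation : pderiv m (loopDerivation k g) = loopDerivation k (pderiv m g) +
      (((k : R) + m) • pderiv (k + m) g + ((k : R) - m) • pderiv (Nat.dist k m) g) := by
    have := DFunLike.congr_fun (commutator_pderiv_loopDerivation (R := R) hm k) g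
    rwa [Derivation.commutator_apply, sub_eq_iff_eq_add'] at this
  have pderiv_operator : pderiv m (loopOperator k g) = pderiv m (loopDrift k) * g +
      (loopOperator k (pderiv m g) + (((k : R) + m) • pderiv (k + m) g +
        ((k : R) - m) • pderiv (Nat.dist k m) g)) := by
    simp only [loopOperator_apply, map_add, Derivation.leibniz, pderiv_derivation, smul_eq_mul]
    ring
  rw [loopOperator_X_mul, map_add, gaussianTraces_X_mul, pderiv_operator, map_smul, sub_mul]
  simp only [map_add, map_sub, map_smul, gaussianTraces_X_mul,
    gaussianTraces_pderiv_loopDrift_mul n hm, smul_eq_mul, Nat.cast_add]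
  ring

lemma gaussianTraces_X (n : R) (k : ℕ) : gaussianTraces n (X k) = traceMean n k := by
  rw [← mul_one (X k), gaussianTraces_X_mul, gaussianTraces, gaussianFunctional_one,
    Derivation.map_one_eq_zero, map_zero, mul_zero, mul_one, add_zero]

lemma gaussianTraces_X_mul_X (n : R) (k l : ℕ) :
    gaussianTraces n (X k * X l) =
      traceMean n k * traceMean n l + if k = l then (k : R) else 0 := by
  rw [gaussianTraces_X_mul, gaussianTraces_X, pderiv_X_eq_ite, apply_ite (gaussianTraces n),
    map_zero, gaussianTraces, gaussianFunctional_one, mul_ite, mul_one, mul_zero,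
    if_congr eq_comm rfl rfl]

lemma gaussianTraces_loopDrift_two_mul (n : R) (m : ℕ) :
    gaussianTraces n (loopDrift (2 * m)) = 0 := by
  obtain rfl | hm := Nat.eq_zero_or_pos m
  · simp [loopDrift]
  have card_even : ((Finset.Icc 1 (2 * m)).filter Even).card = m := by
    have Icc_eq : Finset.Icc 1 (2 * m) = Finset.Ioc 0 (2 * m) := rfl
    simp only [even_iff_two_dvd, Icc_eq, Nat.Ioc_filter_dvd_card_eq_div,
      Nat.mul_div_cancel_left m two_pos]
  have term_eq : ∀ i ∈ Finset.Icc 1 (2 * m),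
      gaussianTraces n (X (Nat.dist (2 * m) (2 * i)) - X i * X (2 * m - i)) =
        1 + (if i = m then n - 1 - (m : R) else 0) - (if Even i then 1 else 0) -
          if i = 2 * m then n - 1 else 0 := by
    intro i hi
    rw [Finset.mem_Icc] at hi
    have dist_eq_zero_iff : Nat.dist (2 * m) (2 * i) = 0 ↔ i = m := by unfold Nat.dist; omega
    have even_dist : Even (Nat.dist (2 * m) (2 * i)) := by unfold Nat.dist; grind
    rw [map_sub, gaussianTraces_X, gaussianTraces_X_mul_X, traceMean_of_even n even_dist,
      if_congr dist_eq_zero_iff rfl rfl, traceMean_of_pos n (by omega : 0 < i)]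
    by_cases heven : Even i
    · rw [traceMean_of_even n (by grind : Even (2 * m - i)), if_pos heven]
      split_ifs <;> first | omega | (subst_vars; ring1)
    · have traceMean_eq : traceMean n (2 * m - i) = 0 := by
        rw [traceMean_of_pos n (by grind), if_neg (by grind)]
      rw [if_neg heven]
      split_ifs <;> first | omega | (subst_vars; ring1) | grind
  rw [loopDrift, map_sum, Finset.sum_congr rfl term_eq, Finset.sum_sub_distrib,
    Finset.sum_sub_distrib, Finset.sum_add_distrib, Finset.sum_ite_eq', Finset.sum_ite_eq',
    Finset.sum_boole, card_even, if_pos (by rw [Finset.mem_Icc]; omega),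
    if_pos (by rw [Finset.mem_Icc]; omega)]
  simp only [Finset.sum_const, Nat.card_Icc, Nat.add_sub_cancel, nsmul_one, Nat.cast_mul,
    Nat.cast_two]
  ring

lemma gaussianTraces_loopDrift (n : R) (k : ℕ) : gaussianTraces n (loopDrift k) = 0 := by
  obtain ⟨m, rfl | rfl⟩ := k.even_or_odd'
  · exact gaussianTraces_loopDrift_two_mul n m
  rw [loopDrift, map_sum]
  refine Finset.sum_eq_zero fun i hi => ?_
  rw [Finset.mem_Icc] at hi
  have odd_dist : ¬Even (Nat.dist (2 * m + 1) (2 * i)) := by unfold Nat.dist; grind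
  have traceMean_mul : traceMean n i * traceMean n (2 * m + 1 - i) = 0 := by
    obtain heven | hodd := Nat.even_or_odd i
    · rw [traceMean_of_not_even n (by grind : ¬Even (2 * m + 1 - i)), mul_zero]
    · rw [traceMean_of_not_even n (Nat.not_even_iff_odd.2 hodd), zero_mul]
  rw [map_sub, gaussianTraces_X, gaussianTraces_X_mul_X, traceMean_of_not_even n odd_dist,
    traceMean_mul, if_neg (by omega), add_zero, sub_zero]

lemma gaussianTraces_loopOperator (n : R) (k : ℕ) (g : MvPolynomial ℕ R) :
    gaussianTraces n (loopOperator k g) = 0 := by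
  have comp_eq := eq_smul_gaussianFunctional (D := gaussianTraces n ∘ₗ loopOperator k)
    (gaussianTraces_loopOperator_X_mul n k)
  have apply_eq := LinearMap.congr_fun comp_eq g
  rwa [LinearMap.smul_apply, LinearMap.comp_apply, LinearMap.comp_apply, loopOperator_one,
    gaussianTraces_loopDrift, zero_smul] at apply_eq

end GaussianTraces

section LoopFunctional

open MvPolynomial

variable {R : Type*} [CommRing R]

/-- A linear functional `D` on polynomials in the power sums satisfies the loop equations in
dimension `n` if it vanishes on the range of every loop operator and `p_0` acts as the scalar `n`.
-/
structure IsLoopFunctional (n : R) (D : MvPolynomial ℕ R →ₗ[R] R) : Prop where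
  X_zero_mul : ∀ g, D (X 0 * g) = n * D g
  loopOperator_eq_zero : ∀ k g, D (loopOperator k g) = 0

lemma isLoopFunctional_gaussianTraces (n : R) : IsLoopFunctional n (gaussianTraces n) where
  X_zero_mul g := by
    rw [gaussianTraces_X_mul, traceMean_zero, Nat.cast_zero, zero_mul, add_zero]
  loopOperator_eq_zero := gaussianTraces_loopOperator n

lemma finite_setOf_apply_zero_eq_zero_and_weight_eq (N : ℕ) :
    {s : ℕ →₀ ℕ | s 0 = 0 ∧ Finsupp.weight id s = N}.Finite := by
  refine (Finset.finite_toSet (Finset.finsupp (Finset.range (N + 1)) fun _ =>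
    Finset.range (N + 1))).subset ?_
  rintro s ⟨hs0, rfl⟩
  refine Finset.mem_finsupp_iff.2 ⟨fun k hk => ?_, fun k _ => ?_⟩
  · have id_le := Finsupp.le_weight_of_ne_zero' id (Finsupp.mem_support_iff.1 hk)
    exact Finset.mem_range_succ_iff.2 id_le
  · obtain rfl | hk := eq_or_ne k 0
    · rw [hs0]
      exact Finset.mem_range_succ_iff.2 (Nat.zero_le _)
    · exact Finset.mem_range_succ_iff.2 (Finsupp.le_weight id (s := k) hk s)

namespace IsLoopFunctional

section CommRing

variable {n : R} {D D' : MvPolynomial ℕ R →ₗ[R] R}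

lemma sub (hD : IsLoopFunctional n D) (hD' : IsLoopFunctional n D') :
    IsLoopFunctional n (D - D') where
  X_zero_mul g := by
    rw [LinearMap.sub_apply, hD.X_zero_mul, hD'.X_zero_mul, LinearMap.sub_apply, mul_sub]
  loopOperator_eq_zero k g := by
    rw [LinearMap.sub_apply, hD.loopOperator_eq_zero, hD'.loopOperator_eq_zero, sub_self]

lemma X_zero_pow_mul (hD : IsLoopFunctional n D) (m : ℕ) (g : MvPolynomial ℕ R) :
    D (X 0 ^ m * g) = n ^ m * D g := by
  induction m with
  | zero => rw [pow_zero, pow_zero, one_mul, one_mul]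
  | succ m ih => rw [pow_succ', mul_assoc, hD.X_zero_mul, ih, pow_succ', mul_assoc]

lemma X_mul (hD : IsLoopFunctional n D) {k : ℕ} (hk : 0 < k) (g : MvPolynomial ℕ R) :
    (n - 1) * D (X k * g) =
      ∑ i ∈ Finset.Ico 1 k, D ((X (Nat.dist k (2 * i)) - X i * X (k - i)) * g) +
        D (loopDerivation k g) := by
  have drift_eq : (loopDrift k : MvPolynomial ℕ R) =
      ∑ i ∈ Finset.Ico 1 k, (X (Nat.dist k (2 * i)) - X i * X (k - i)) + (X k - X 0 * X k) := by
    rw [loopDrift, ← Finset.Ico_insert_right (by omega), Finset.sum_insert Finset.right_notMem_Ico,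
      add_comm, Nat.sub_self, mul_comm (X k), Nat.dist_eq_sub_of_le (by omega),
      show 2 * k - k = k by omega]
  have loop := hD.loopOperator_eq_zero k g
  rw [loopOperator_apply, drift_eq, add_mul, sub_mul (X k), mul_assoc, map_add, map_add, map_sub,
    hD.X_zero_mul, Finset.sum_mul, map_sum] at loop
  linear_combination -loop

end CommRing

section Real

variable {n c : ℝ} {D : MvPolynomial ℕ ℝ →ₗ[ℝ] ℝ} {N k : ℕ} {u : ℕ →₀ ℕ}

lemma abs_loopDerivation_monomial_le
    (hlow : ∀ s, Finsupp.weight id s < N → D (monomial s 1) = 0)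
    (htop : ∀ s, s 0 = 0 → Finsupp.weight id s = N → |D (monomial s 1)| ≤ c)
    (hk : 0 < k) (hu0 : u 0 = 0) (hN : k + Finsupp.weight id u = N) :
    |D (loopDerivation k (monomial u 1))| ≤ Finsupp.weight id u * c := by
  have sub_le : ∀ l ∈ u.support,
      |D (monomial (u - Finsupp.single l 1 + Finsupp.single (Nat.dist k l) 1) 1 -
        monomial (u - Finsupp.single l 1 + Finsupp.single (k + l) 1) 1)| ≤ c := by
    intro l hl
    have hul : u l ≠ 0 := Finsupp.mem_support_iff.1 hl
    have hl0 : l ≠ 0 := by rintro rfl; exact hul hu0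
    obtain ⟨w, rfl⟩ := exists_add_of_le (Finsupp.single_le_iff.2 (Nat.one_le_iff_ne_zero.2 hul))
    have hw0 : w 0 = 0 := by simpa [hl0] using hu0
    rw [map_add, Finsupp.weight_single, one_smul, id] at hN
    have left_eq : D (monomial (w + Finsupp.single (Nat.dist k l) 1) 1) = 0 := by
      refine hlow _ ?_
      rw [map_add, Finsupp.weight_single, one_smul, id, ← hN, Nat.dist]
      omega
    rw [add_tsub_cancel_left, map_sub, left_eq, zero_sub, abs_neg]
    refine htop _ ?_ ?_
    · rw [Finsupp.add_apply, Finsupp.single_eq_of_ne (by omega), hw0, add_zero]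
    · rw [map_add, Finsupp.weight_single, one_smul, id, ← hN]
      ring
  rw [loopDerivation_monomial, map_sum, Finsupp.weight_apply, Finsupp.sum, Nat.cast_sum,
    Finset.sum_mul]
  refine (Finset.abs_sum_le_sum_abs _ _).trans (Finset.sum_le_sum fun l hl => ?_)
  rw [map_smul, smul_eq_mul, abs_mul, Nat.abs_cast]
  exact mul_le_mul_of_nonneg_left (sub_le l hl) (Nat.cast_nonneg _)

lemma sub_one_mul_abs_X_mul_monomial_le (hD : IsLoopFunctional n D) (hn : 1 ≤ n)
    (hlow : ∀ s, Finsupp.weight id s < N → D (monomial s 1) = 0)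
    (htop : ∀ s, s 0 = 0 → Finsupp.weight id s = N → |D (monomial s 1)| ≤ c)
    (hk : 0 < k) (hu0 : u 0 = 0) (hN : k + Finsupp.weight id u = N) :
    (n - 1) * |D (X k * monomial u 1)| ≤ (N - 1) * c := by
  have term_le : ∀ i ∈ Finset.Ico 1 k,
      |D ((X (Nat.dist k (2 * i)) - X i * X (k - i)) * monomial u 1)| ≤ c := by
    intro i hi
    rw [Finset.mem_Ico] at hi
    have left_eq : D (X (Nat.dist k (2 * i)) * monomial u 1) = 0 := by
      rw [X, monomial_mul, one_mul]
      refine hlow _ ?_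
      rw [map_add, Finsupp.weight_single, one_smul, id, ← hN, Nat.dist]
      omega
    have right_le : |D (X i * X (k - i) * monomial u 1)| ≤ c := by
      rw [X, X, monomial_mul, monomial_mul, one_mul, one_mul]
      refine htop _ ?_ ?_
      · rw [Finsupp.add_apply, Finsupp.add_apply, Finsupp.single_eq_of_ne (by omega),
          Finsupp.single_eq_of_ne (by omega), hu0, add_zero, add_zero]
      · rw [map_add, map_add, Finsupp.weight_single, Finsupp.weight_single, one_smul, one_smul, id,
          id, ← hN]
        omega
    rwa [sub_mul, map_sub, left_eq, zero_sub, abs_neg]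
  have sum_le : |∑ i ∈ Finset.Ico 1 k,
      D ((X (Nat.dist k (2 * i)) - X i * X (k - i)) * monomial u 1)| ≤ (k - 1) * c := by
    refine (Finset.abs_sum_le_sum_abs _ _).trans
      ((Finset.sum_le_card_nsmul _ _ _ term_le).trans_eq ?_)
    rw [Nat.card_Ico, nsmul_eq_mul, Nat.cast_sub (by omega), Nat.cast_one]
  rw [← abs_of_nonneg (sub_nonneg.2 hn), ← abs_mul, hD.X_mul hk]
  refine (abs_add_le _ _).trans ((add_le_add sum_le
    (abs_loopDerivation_monomial_le hlow htop hk hu0 hN)).trans_eq ?_)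
  rw [← hN, Nat.cast_add]
  ring

lemma monomial_eq_zero_of_apply_zero_eq_zero (hD : IsLoopFunctional n D) (hN : (N : ℝ) < n)
    (hN0 : 0 < N) (hlow : ∀ s, Finsupp.weight id s < N → D (monomial s 1) = 0)
    {s : ℕ →₀ ℕ} (hs0 : s 0 = 0) (hs : Finsupp.weight id s = N) : D (monomial s 1) = 0 := by
  obtain ⟨t, ⟨ht0, ht⟩, htop⟩ := Set.exists_max_image _ (fun t => |D (monomial t 1)|)
    (finite_setOf_apply_zero_eq_zero_and_weight_eq N) ⟨s, hs0, hs⟩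
  obtain ⟨k, hk⟩ : ∃ k, t k ≠ 0 := by
    by_contra! h
    rw [(Finsupp.ext h : t = 0), map_zero] at ht
    omega
  have hk0 : k ≠ 0 := by rintro rfl; exact hk ht0
  obtain ⟨u, rfl⟩ := exists_add_of_le (Finsupp.single_le_iff.2 (Nat.one_le_iff_ne_zero.2 hk))
  rw [map_add, Finsupp.weight_single, one_smul, id] at ht
  have hu0 : u 0 = 0 := by simpa [hk0] using ht0
  have hN1 : (1 : ℝ) ≤ N := by exact_mod_cast hN0
  have contraction := hD.sub_one_mul_abs_X_mul_monomial_le (hN1.trans hN.le) hlow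
    (fun r hr0 hr => htop r ⟨hr0, hr⟩) (Nat.pos_of_ne_zero hk0) hu0 ht
  rw [monomial_single_add, pow_one] at contraction htop
  have max_eq : |D (X k * monomial u 1)| = 0 := by nlinarith [abs_nonneg (D (X k * monomial u 1))]
  exact abs_nonpos_iff.1 ((htop s ⟨hs0, hs⟩).trans_eq max_eq)

theorem monomial_eq_zero (hD : IsLoopFunctional n D) (hD1 : D 1 = 0) (s : ℕ →₀ ℕ)
    (hs : ((Finsupp.weight id s : ℕ) : ℝ) < n) : D (monomial s 1) = 0 := by
  induction hN : (Finsupp.weight id s : ℕ) using Nat.strong_induction_on generalizing s with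
  | _ N ih =>
    have weight_erase : (Finsupp.weight id (s.erase 0) : ℕ) = N := by
      have weight_add := congrArg (Finsupp.weight id) (Finsupp.single_add_erase 0 s)
      rwa [map_add, Finsupp.weight_single, id, smul_zero, zero_add, hN] at weight_add
    have erase_eq_zero : D (monomial (s.erase 0) 1) = 0 := by
      obtain rfl | hN0 := Nat.eq_zero_or_pos N
      · have erase_eq : s.erase 0 = 0 := by
          ext k
          obtain rfl | hk := eq_or_ne k 0
          · rw [Finsupp.erase_same, Finsupp.zero_apply]
          · rw [Finsupp.zero_apply]
            exact Nat.le_zero.1 ((Finsupp.le_weight id (s := k) hk _).trans_eq weight_erase)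
        rw [erase_eq, ← C_apply, C_1, hD1]
      refine hD.monomial_eq_zero_of_apply_zero_eq_zero (hN ▸ hs) hN0
        (fun t ht => ih _ ht t ?_ rfl) Finsupp.erase_same weight_erase
      exact (Nat.cast_lt.2 ht).trans (hN ▸ hs)
    rw [← Finsupp.single_add_erase 0 s, monomial_single_add, hD.X_zero_pow_mul, erase_eq_zero,
      mul_zero]

end Real

end IsLoopFunctional

end LoopFunctional

section DerivationCalculus

open MvPolynomial

variable {σ : Type*}

lemma hasDerivAt_eval_mkDerivation {𝕜 : Type*} [NontriviallyNormedField 𝕜] {v : 𝕜 → σ → 𝕜}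
    {f : σ → MvPolynomial σ 𝕜} {t : 𝕜}
    (hv : ∀ i, HasDerivAt (fun s => v s i) (eval (v t) (f i)) t) (g : MvPolynomial σ 𝕜) :
    HasDerivAt (fun s => eval (v s) g) (eval (v t) (mkDerivation 𝕜 f g)) t := by
  induction g using MvPolynomial.induction_on with
  | C a => simpa only [eval_C, derivation_C, map_zero] using hasDerivAt_const t a
  | add p q hp hq => simpa only [map_add] using hp.fun_add hq
  | mul_X p i hp =>
    simp only [map_mul, eval_X]
    refine (hp.fun_mul (hv i)).congr_deriv ?_
    rw [Derivation.leibniz, mkDerivation_X, smul_eq_mul, smul_eq_mul, map_add, map_mul, map_mul,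
      eval_X]
    ring

lemma continuous_eval_mkDerivation_C {α R : Type*} [TopologicalSpace α] [CommRing R]
    [TopologicalSpace R] [IsTopologicalRing R] {v w : α → σ → R}
    (hv : ∀ i, Continuous fun x => v x i) (hw : ∀ i, Continuous fun x => w x i)
    (g : MvPolynomial σ R) :
    Continuous fun x => eval (v x) (mkDerivation R (fun i => C (w x i)) g) := by
  induction g using MvPolynomial.induction_on with
  | C a => simpa only [derivation_C, map_zero] using continuous_const
  | add p q hp hq => simpa only [map_add] using hp.fun_add hq
  | mul_X p i hp =>
    simp only [Derivation.leibniz, mkDerivation_X, smul_eq_mul, map_add, map_mul, eval_X, eval_C]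
    exact (((MvPolynomial.continuous_eval p).comp (continuous_pi hv)).mul (hw i)).add
      ((hv i).mul hp)

lemma sum_mul_eval_mkDerivation {R ι : Type*} [CommRing R] (s : Finset ι) (c : ι → R) (r : R)
    {x : σ → R} {F : ι → σ → MvPolynomial σ R} {f : σ → MvPolynomial σ R}
    (hF : ∀ i, ∑ a ∈ s, c a * eval x (F a i) = r * eval x (f i)) (g : MvPolynomial σ R) :
    ∑ a ∈ s, c a * eval x (mkDerivation R (F a) g) = r * eval x (mkDerivation R f g) := by
  induction g using MvPolynomial.induction_on with
  | C _ => simp only [derivation_C, map_zero, mul_zero, Finset.sum_const_zero]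
  | add p q hp hq => simp only [map_add, mul_add, Finset.sum_add_distrib, hp, hq]
  | mul_X p i hp =>
    simp only [Derivation.leibniz, mkDerivation_X, smul_eq_mul, map_add, map_mul, eval_X, mul_add,
      Finset.sum_add_distrib, mul_left_comm (c _), mul_left_comm r, ← Finset.mul_sum, hF, hp]

end DerivationCalculus

section CompactGroup

variable {G E : Type*} [TopologicalSpace G] [CompactSpace G] [MeasurableSpace G] [BorelSpace G]
  [NormedAddCommGroup E] {μ : Measure G} [IsFiniteMeasure μ]

lemma integrable_of_continuous_of_compactSpace {f : G → E} (hf : Continuous f) : Integrable f μ :=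
  hf.integrable_of_hasCompactSupport (HasCompactSupport.of_compactSpace f)

lemma integral_eq_zero_of_hasDerivAt_mul_left [Group G] [ContinuousMul G] [NormedSpace ℝ E]
    [μ.IsMulLeftInvariant] {f f' : G → E} (hf : Continuous f) (hf' : Continuous f') (γ : ℝ → G)
    (hderiv : ∀ x t, HasDerivAt (fun s => f (γ s * x)) (f' (γ t * x)) t) :
    ∫ x, f' x ∂μ = 0 := by
  obtain ⟨c, hc⟩ : ∃ c, ∀ x, ‖f' x‖ ≤ c := by
    obtain ⟨c, hc⟩ := isCompact_univ.exists_bound_of_continuousOn hf'.continuousOn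
    exact ⟨c, fun x => hc x trivial⟩
  have integrable_translate {h : G → E} (hh : Continuous h) (t : ℝ) :
      Integrable (fun x => h (γ t * x)) μ :=
    integrable_of_continuous_of_compactSpace (hh.comp (continuous_const_mul (γ t)))
  have deriv_integral := (hasDerivAt_integral_of_dominated_loc_of_deriv_le (x₀ := 0)
    (bound := fun _ => c) Filter.univ_mem
    (.of_forall fun t => (integrable_translate hf t).aestronglyMeasurable)
    (integrable_translate hf 0) (integrable_translate hf' 0).aestronglyMeasurable
    (.of_forall fun x t _ => hc (γ t * x)) (integrable_const c)
    (.of_forall fun x t _ => hderiv x t)).2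
  simp only [integral_mul_left_eq_self] at deriv_integral
  exact deriv_integral.unique (hasDerivAt_const 0 _)

end CompactGroup

section SkewMatrices

variable {ι R : Type*} [CommRing R]

lemma transpose_smul_of_skew {A : Matrix ι ι R} (hA : Aᵀ = -A) (t : R) :
    (t • A)ᵀ = -(t • A) := by
  rw [transpose_smul, hA, smul_neg]

variable [DecidableEq ι]

/-- The elementary skew-symmetric matrix `E_ab - E_ba`. Those with `a < b` form the standard basis
of the Lie algebra of the orthogonal group; summing over all pairs `(a, b)` counts each basis vector
twice, up to sign. -/
def skewSingle (a b : ι) : Matrix ι ι R :=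
  single a b 1 - single b a 1

lemma transpose_skewSingle (a b : ι) : (skewSingle a b : Matrix ι ι R)ᵀ = -skewSingle a b := by
  rw [skewSingle, transpose_sub, transpose_single, transpose_single, neg_sub]

variable [Fintype ι]

lemma trace_skewSingle_mul (a b : ι) (A : Matrix ι ι R) :
    trace (skewSingle a b * A) = A b a - A a b := by
  rw [skewSingle, sub_mul, trace_sub, trace_single_mul, trace_single_mul, one_smul, one_smul]

lemma sum_trace_skewSingle_mul_mul_trace (A B : Matrix ι ι R) :
    ∑ a, ∑ b, trace (skewSingle a b * A) * trace (skewSingle a b * B) =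
      2 * (trace (A * Bᵀ) - trace (A * B)) := by
  have trace_mul_transpose : trace (A * Bᵀ) = ∑ a, ∑ b, A a b * B a b := by
    simp only [trace, diag_apply, mul_apply, transpose_apply]
  have trace_mul : trace (A * B) = ∑ a, ∑ b, A a b * B b a := by
    simp only [trace, diag_apply, mul_apply]
  simp only [trace_skewSingle_mul, sub_mul, mul_sub, Finset.sum_sub_distrib]
  rw [Finset.sum_comm (f := fun a b => A b a * B b a),
    Finset.sum_comm (f := fun a b => A b a * B a b), ← trace_mul_transpose, ← trace_mul]
  ring

lemma sum_trace_skewSingle_mul_mul_skewSingle_mul (A B : Matrix ι ι R) :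
    ∑ a, ∑ b, trace (skewSingle a b * (A * skewSingle a b * B)) =
      2 * (trace (A * Bᵀ) - trace A * trace B) := by
  have entry_eq (a b c d : ι) : (A * skewSingle a b * B : Matrix ι ι R) c d =
      A c a * B b d - A c b * B a d := by
    simp [skewSingle, mul_sub, sub_mul, mul_apply, single_apply, ite_and]
  have trace_mul_transpose : trace (A * Bᵀ) = ∑ a, ∑ b, A a b * B a b := by
    simp only [trace, diag_apply, mul_apply, transpose_apply]
  have trace_mul_trace : trace A * trace B = ∑ a, ∑ b, A a a * B b b :=
    Finset.sum_mul_sum ..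
  simp only [trace_skewSingle_mul, entry_eq, Finset.sum_sub_distrib]
  rw [Finset.sum_comm (f := fun a b => A b a * B b a),
    Finset.sum_comm (f := fun a b => A b b * B a a), ← trace_mul_transpose, ← trace_mul_trace]
  ring

lemma trace_pow_mul_transpose_pow {A : Matrix ι ι R} (hA : A * Aᵀ = 1) (k l : ℕ) :
    trace (A ^ k * (A ^ l)ᵀ) = trace (A ^ Nat.dist k l) := by
  have cancel (c l : ℕ) : A ^ (c + l) * (A ^ l)ᵀ = A ^ c := by
    rw [pow_add, mul_assoc, transpose_pow, pow_mul_pow_eq_one l hA, mul_one]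
  obtain ⟨c, rfl⟩ | ⟨c, rfl⟩ := (le_total l k).imp Nat.exists_eq_add_of_le' Nat.exists_eq_add_of_le'
  · rw [cancel, Nat.dist_eq_sub_of_le_right (Nat.le_add_left l c), Nat.add_sub_cancel]
  · rw [← trace_transpose, transpose_mul, transpose_transpose, cancel,
      Nat.dist_eq_sub_of_le (Nat.le_add_left k c), Nat.add_sub_cancel]

end SkewMatrices

section SkewExponential

variable {ι : Type*} [Fintype ι] [DecidableEq ι]

lemma exp_mul_transpose_exp_of_skew {X : Matrix ι ι ℝ} (hX : Xᵀ = -X) :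
    NormedSpace.exp X * (NormedSpace.exp X)ᵀ = 1 := by
  rw [← Matrix.exp_transpose, hX, Matrix.exp_neg]
  exact Matrix.mul_nonsing_inv _ ((Matrix.isUnit_iff_isUnit_det _).1 (Matrix.isUnit_exp X))

lemma det_exp_of_skew {X : Matrix ι ι ℝ} (hX : Xᵀ = -X) : (NormedSpace.exp X).det = 1 := by
  -- The orthogonal matrix `exp X` is the square of the orthogonal matrix `exp (X / 2)`.
  have det_mul_det := congrArg det
    (exp_mul_transpose_exp_of_skew (transpose_smul_of_skew hX (1 / 2)))
  have two_nsmul_half : 2 • ((1 / 2 : ℝ) • X) = X := by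
    rw [two_nsmul, ← add_smul, add_halves, one_smul]
  rw [det_mul, det_transpose, det_one] at det_mul_det
  rw [← two_nsmul_half, Matrix.exp_nsmul, det_pow, sq, det_mul_det]

attribute [local instance] Matrix.linftyOpNormedRing Matrix.linftyOpNormedAlgebra

lemma hasDerivAt_trace_mul_exp_smul_mul_pow (X A B : Matrix ι ι ℝ) (k : ℕ) (t : ℝ) :
    HasDerivAt (fun s : ℝ => trace (B * (NormedSpace.exp (s • X) * A) ^ k))
      (∑ i ∈ Finset.range k, trace (B * ((NormedSpace.exp (t • X) * A) ^ (k - 1 - i) * X *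
        (NormedSpace.exp (t • X) * A) ^ (i + 1)))) t := by
  have deriv_pow : HasDerivAt (fun s : ℝ => B * (NormedSpace.exp (s • X) * A) ^ k)
      (∑ i ∈ Finset.range k, B * ((NormedSpace.exp (t • X) * A) ^ (k - 1 - i) * X *
        (NormedSpace.exp (t • X) * A) ^ (i + 1))) t := by
    have deriv_product := (((hasDerivAt_exp_smul_const' X t).mul_const A).fun_pow' k).const_mul B
    simp only [Finset.mul_sum, pow_succ', mul_assoc, Nat.pred_eq_sub_one] at deriv_product ⊢
    exact deriv_product
  exact ((traceLinearMap ι ℝ ℝ).toContinuousLinearMap.hasFDerivAt.comp_hasDerivAt t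
    deriv_pow).congr_deriv (trace_sum ..)

lemma hasDerivAt_trace_exp_smul_mul_pow (X A : Matrix ι ι ℝ) (k : ℕ) (t : ℝ) :
    HasDerivAt (fun s : ℝ => trace ((NormedSpace.exp (s • X) * A) ^ k))
      (k * trace (X * (NormedSpace.exp (t • X) * A) ^ k)) t := by
  have deriv_trace := hasDerivAt_trace_mul_exp_smul_mul_pow X A 1 k t
  simp only [one_mul] at deriv_trace
  refine deriv_trace.congr_deriv ?_
  rw [← nsmul_eq_mul, ← Finset.card_range k, ← Finset.sum_const, Finset.card_range]
  refine Finset.sum_congr rfl fun i hi => ?_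
  rw [mul_assoc, trace_mul_comm, mul_assoc, ← pow_add,
    show i + 1 + (k - 1 - i) = k by have := Finset.mem_range.1 hi; omega]

end SkewExponential

namespace SO

variable {n : ℕ}

instance : BorelSpace (Matrix (Fin n) (Fin n) ℝ) :=
  inferInstanceAs (BorelSpace (Fin n → Fin n → ℝ))

instance : BorelSpace (Matrix.orthogonalGroup (Fin n) ℝ) := Subtype.borelSpace _

instance : BorelSpace (SO n) := Subtype.borelSpace _

/-- The inclusion of `SO(n,ℝ)` into the matrix algebra. -/
def toMatrix : SO n →* Matrix (Fin n) (Fin n) ℝ :=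
  (Matrix.orthogonalGroup (Fin n) ℝ).subtype.comp (SO n).subtype

lemma isEmbedding_toMatrix : Topology.IsEmbedding (toMatrix : SO n → Matrix (Fin n) (Fin n) ℝ) :=
  Topology.IsEmbedding.subtypeVal.comp Topology.IsEmbedding.subtypeVal

lemma toMatrix_mul_transpose (M : SO n) : toMatrix M * (toMatrix M)ᵀ = 1 :=
  (Matrix.mem_orthogonalGroup_iff (Fin n) ℝ).1 M.1.2

/-- A real orthogonal matrix of determinant `1`, as an element of `SO(n,ℝ)`. -/
def ofMatrix (A : Matrix (Fin n) (Fin n) ℝ) (hA : A * Aᵀ = 1) (hdet : A.det = 1) : SO n :=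
  ⟨⟨A, (Matrix.mem_orthogonalGroup_iff (Fin n) ℝ).2 hA⟩, hdet⟩

lemma range_toMatrix :
    Set.range (toMatrix : SO n → Matrix (Fin n) (Fin n) ℝ) = {A | A * Aᵀ = 1 ∧ A.det = 1} := by
  refine Set.Subset.antisymm ?_ fun A hA => ⟨ofMatrix A hA.1 hA.2, rfl⟩
  rintro _ ⟨M, rfl⟩
  exact ⟨toMatrix_mul_transpose M, M.2⟩

instance : CompactSpace (SO n) := by
  have isClosed_range : IsClosed (Set.range (toMatrix : SO n → Matrix (Fin n) (Fin n) ℝ)) := by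
    rw [range_toMatrix]
    exact (isClosed_eq (by fun_prop) continuous_const).inter
      (isClosed_eq (by fun_prop) continuous_const)
  have isCompact_cube : IsCompact (Set.univ.pi fun _ : Fin n => Set.univ.pi fun _ : Fin n =>
      Set.Icc (-1 : ℝ) 1) :=
    isCompact_univ_pi fun _ => isCompact_univ_pi fun _ => isCompact_Icc
  rw [← isCompact_univ_iff, isEmbedding_toMatrix.isCompact_iff, Set.image_univ]
  refine IsCompact.of_isClosed_subset (X := Fin n → Fin n → ℝ) isCompact_cube isClosed_range ?_
  rintro _ ⟨M, rfl⟩ i - j -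
  exact abs_le.1 (entry_norm_bound_of_unitary M.1.2 i j)

/-- The exponential of a skew-symmetric matrix, as an element of `SO(n,ℝ)`. -/
noncomputable def exp (X : Matrix (Fin n) (Fin n) ℝ) (hX : Xᵀ = -X) : SO n :=
  ofMatrix (NormedSpace.exp X) (exp_mul_transpose_exp_of_skew hX) (det_exp_of_skew hX)

lemma toMatrix_exp_mul {X : Matrix (Fin n) (Fin n) ℝ} (hX : Xᵀ = -X) (M : SO n) :
    toMatrix (exp X hX * M) = NormedSpace.exp X * toMatrix M :=
  map_mul ..

/-- The sequence of power sums `p_l = Tr (M ^ l)`, at which polynomials in the power sums are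
evaluated. -/
noncomputable def traces (M : SO n) (l : ℕ) : ℝ := trSO M l

lemma traces_eq_trace (M : SO n) (l : ℕ) : traces M l = trace (toMatrix M ^ l) := by
  rw [traces, trSO, zpow_natCast, ← map_pow]
  rfl

lemma continuous_trace_mul_toMatrix_pow (A : Matrix (Fin n) (Fin n) ℝ) (l : ℕ) :
    Continuous fun M : SO n => trace (A * toMatrix M ^ l) :=
  (continuous_const.mul (isEmbedding_toMatrix.continuous.pow l)).matrix_trace

lemma continuous_traces (l : ℕ) : Continuous fun M : SO n => traces M l := by
  simpa only [traces_eq_trace, one_mul] using continuous_trace_mul_toMatrix_pow (1 : Matrix ..) l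

open MvPolynomial

lemma continuous_eval_traces (g : MvPolynomial ℕ ℝ) :
    Continuous fun M : SO n => eval (traces M) g :=
  (MvPolynomial.continuous_eval g).comp (continuous_pi continuous_traces)

/-- The derivative in the direction `X` at `M`, along `t ↦ exp (t X) M`, of a polynomial in the
power sums: the derivation with `p_l ↦ l Tr (X M ^ l)`. Its values are polynomials that still have
to be evaluated at `traces M`. -/
noncomputable def tracesDerivation (X : Matrix (Fin n) (Fin n) ℝ) (M : SO n) :
    Derivation ℝ (MvPolynomial ℕ ℝ) (MvPolynomial ℕ ℝ) :=
  mkDerivation ℝ fun l => C (l * trace (X * toMatrix M ^ l))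

/-- The derivative in the direction `X` at `M` of `M ↦ Tr (X M ^ k) g(M)`, for a polynomial `g` in
the power sums. -/
noncomputable def fieldDerivative (X : Matrix (Fin n) (Fin n) ℝ) (k : ℕ) (g : MvPolynomial ℕ ℝ)
    (M : SO n) : ℝ :=
  (∑ i ∈ Finset.range k, trace (X * (toMatrix M ^ (k - 1 - i) * X * toMatrix M ^ (i + 1)))) *
    eval (traces M) g + trace (X * toMatrix M ^ k) * eval (traces M) (tracesDerivation X M g)

lemma continuous_fieldDerivative (X : Matrix (Fin n) (Fin n) ℝ) (k : ℕ) (g : MvPolynomial ℕ ℝ) :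
    Continuous (fieldDerivative X k g) := by
  have toMatrix_pow (l : ℕ) : Continuous fun M : SO n => toMatrix M ^ l :=
    isEmbedding_toMatrix.continuous.pow l
  refine .add (.mul (continuous_finsetSum _ fun i _ => ?_) (continuous_eval_traces g))
    (.mul (continuous_trace_mul_toMatrix_pow X k)
      (continuous_eval_mkDerivation_C continuous_traces (fun l => ?_) g))
  · exact (continuous_const.mul
      (((toMatrix_pow _).mul continuous_const).mul (toMatrix_pow _))).matrix_trace
  · exact continuous_const.mul (continuous_trace_mul_toMatrix_pow X l)

lemma sum_trace_skewSingle_mul_pow_mul_skewSingle_mul_pow (k : ℕ) (M : SO n) :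
    ∑ a, ∑ b, ∑ i ∈ Finset.range k, trace (skewSingle a b *
      (toMatrix M ^ (k - 1 - i) * skewSingle a b * toMatrix M ^ (i + 1))) =
        2 * eval (traces M) (loopDrift k) := by
  have term_eq : ∀ i ∈ Finset.range k, trace (toMatrix M ^ (k - 1 - i) *
      (toMatrix M ^ (i + 1))ᵀ) - trace (toMatrix M ^ (k - 1 - i)) * trace (toMatrix M ^ (i + 1)) =
        traces M (Nat.dist k (2 * (1 + i))) - traces M (1 + i) * traces M (k - (1 + i)) := by
    intro i hi
    rw [Finset.mem_range] at hi
    have dist_eq : Nat.dist (k - 1 - i) (i + 1) = Nat.dist k (2 * (1 + i)) := by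
      unfold Nat.dist
      omega
    rw [trace_pow_mul_transpose_pow (toMatrix_mul_transpose M), dist_eq, traces_eq_trace,
      traces_eq_trace, traces_eq_trace, add_comm i, Nat.sub_sub, mul_comm (trace _)]
  simp only [Finset.sum_comm (t := Finset.range k), sum_trace_skewSingle_mul_mul_skewSingle_mul,
    ← Finset.mul_sum]
  rw [Finset.sum_congr rfl term_eq, loopDrift, ← Finset.Ico_add_one_right_eq_Icc,
    Finset.sum_Ico_eq_sum_range, Nat.add_sub_cancel]
  simp only [map_sum, map_sub, map_mul, eval_X]

lemma sum_trace_skewSingle_mul_pow_mul_eval_tracesDerivation (k : ℕ) (g : MvPolynomial ℕ ℝ)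
    (M : SO n) :
    ∑ a, ∑ b, trace (skewSingle a b * toMatrix M ^ k) *
      eval (traces M) (tracesDerivation (skewSingle a b) M g) =
        2 * eval (traces M) (loopDerivation k g) := by
  have on_generators (l : ℕ) : ∑ p : Fin n × Fin n, trace (skewSingle p.1 p.2 * toMatrix M ^ k) *
      eval (traces M) (C (l * trace (skewSingle p.1 p.2 * toMatrix M ^ l))) =
        2 * eval (traces M) ((l : ℝ) • (X (Nat.dist k l) - X (k + l))) := by
    have casimir := sum_trace_skewSingle_mul_mul_trace (toMatrix M ^ k) (toMatrix M ^ l)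
    rw [trace_pow_mul_transpose_pow (toMatrix_mul_transpose M), ← pow_add] at casimir
    simp only [eval_C, smul_eval, map_sub, eval_X, traces_eq_trace, mul_left_comm _ (l : ℝ),
      ← Finset.mul_sum, Fintype.sum_prod_type, casimir]
  rw [← Fintype.sum_prod_type']
  exact sum_mul_eval_mkDerivation _ _ 2 on_generators g

lemma sum_fieldDerivative_skewSingle (k : ℕ) (g : MvPolynomial ℕ ℝ) (M : SO n) :
    ∑ a, ∑ b, fieldDerivative (skewSingle a b) k g M =
      2 * eval (traces M) (loopOperator k g) := by
  simp only [fieldDerivative, Finset.sum_add_distrib, ← Finset.sum_mul,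
    sum_trace_skewSingle_mul_pow_mul_skewSingle_mul_pow,
    sum_trace_skewSingle_mul_pow_mul_eval_tracesDerivation, loopOperator_apply, map_add, map_mul]
  ring

section FiniteMeasure

variable {μ : Measure (SO n)} [IsFiniteMeasure μ]

lemma memLp_trSO (l : ℕ) (p : ENNReal) : MemLp (fun M : SO n => trSO M l) p μ :=
  (continuous_traces l).memLp_of_hasCompactSupport (.of_compactSpace _)

lemma integral_fieldDerivative_eq_zero [μ.IsMulLeftInvariant] {X : Matrix (Fin n) (Fin n) ℝ}
    (hX : Xᵀ = -X) (k : ℕ) (g : MvPolynomial ℕ ℝ) : ∫ M, fieldDerivative X k g M ∂μ = 0 := by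
  refine integral_eq_zero_of_hasDerivAt_mul_left
    ((continuous_trace_mul_toMatrix_pow X k).mul (continuous_eval_traces g))
    (continuous_fieldDerivative X k g) (fun t => exp (t • X) (transpose_smul_of_skew hX t))
    fun M t => .fun_mul ?_ (hasDerivAt_eval_mkDerivation (fun l => ?_) g)
  · simp only [toMatrix_exp_mul]
    exact hasDerivAt_trace_mul_exp_smul_mul_pow ..
  · simp only [traces_eq_trace, toMatrix_exp_mul, eval_C]
    exact hasDerivAt_trace_exp_smul_mul_pow ..

variable (μ) in
/-- Integration against `μ` of polynomials in the power sums. -/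
noncomputable def tracesIntegral : MvPolynomial ℕ ℝ →ₗ[ℝ] ℝ where
  toFun g := ∫ M, eval (traces M) g ∂μ
  map_add' g h := by
    simp only [map_add]
    exact integral_add (integrable_of_continuous_of_compactSpace (continuous_eval_traces g))
      (integrable_of_continuous_of_compactSpace (continuous_eval_traces h))
  map_smul' c g := by
    simp only [smul_eval, RingHom.id_apply, smul_eq_mul, integral_const_mul]

lemma tracesIntegral_apply (g : MvPolynomial ℕ ℝ) :
    tracesIntegral μ g = ∫ M, eval (traces M) g ∂μ := rfl

lemma isLoopFunctional_tracesIntegral [μ.IsMulLeftInvariant] :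
    IsLoopFunctional (n : ℝ) (tracesIntegral μ) where
  X_zero_mul g := by
    simp only [tracesIntegral_apply, map_mul, eval_X, traces_eq_trace, pow_zero, trace_one,
      Fintype.card_fin, integral_const_mul]
  loopOperator_eq_zero k g := by
    have two_mul_integral : 2 * tracesIntegral μ (loopOperator k g) = 0 := by
      have integrable_field (a b : Fin n) : Integrable (fieldDerivative (skewSingle a b) k g) μ :=
        integrable_of_continuous_of_compactSpace (continuous_fieldDerivative _ k g)
      simp only [tracesIntegral_apply, ← integral_const_mul, ← sum_fieldDerivative_skewSingle]
      rw [integral_finsetSum _ fun a _ => integrable_finsetSum _ fun b _ => integrable_field a b]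
      refine Finset.sum_eq_zero fun a _ => ?_
      rw [integral_finsetSum _ fun b _ => integrable_field a b]
      exact Finset.sum_eq_zero fun b _ =>
        integral_fieldDerivative_eq_zero (transpose_skewSingle a b) k g
    exact (mul_eq_zero.1 two_mul_integral).resolve_left two_ne_zero

end FiniteMeasure

section ProbabilityMeasure

variable {μ : Measure (SO n)} [IsProbabilityMeasure μ] [μ.IsMulLeftInvariant]

theorem tracesIntegral_monomial (s : ℕ →₀ ℕ) (hs : (Finsupp.weight id s : ℕ) < n) :
    tracesIntegral μ (monomial s 1) = gaussianTraces (n : ℝ) (monomial s 1) := by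
  have sub_apply_one : (tracesIntegral μ - gaussianTraces (n : ℝ)) 1 = 0 := by
    rw [LinearMap.sub_apply, tracesIntegral_apply, gaussianTraces, gaussianFunctional_one]
    simp
  exact sub_eq_zero.1 ((isLoopFunctional_tracesIntegral.sub
    (isLoopFunctional_gaussianTraces (n : ℝ))).monomial_eq_zero sub_apply_one s (Nat.cast_lt.2 hs))

theorem integral_prod_trSO_pow (s : ℕ →₀ ℕ) (hs : (Finsupp.weight id s : ℕ) < n) :
    ∫ M : SO n, s.prod (fun l m => trSO M l ^ m) ∂μ =
      s.prod fun l m => gaussianMoment (traceMean (n : ℝ) l) l m := by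
  have moment_eq := tracesIntegral_monomial (μ := μ) s hs
  rwa [tracesIntegral_apply, gaussianTraces, gaussianFunctional_monomial, one_mul,
    integral_congr_ae (.of_forall fun M => (eval_monomial ..).trans (one_mul _))] at moment_eq

lemma integral_trSO_pow {l m : ℕ} (hlm : m * l < n) :
    ∫ M : SO n, trSO M l ^ m ∂μ = gaussianMoment (traceMean (n : ℝ) l) l m := by
  have integral_eq := integral_prod_trSO_pow (μ := μ) (Finsupp.single l m)
    (by rwa [Finsupp.weight_single, smul_eq_mul, id])
  rw [Finsupp.prod_single_index (by rfl)] at integral_eq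
  simpa only [Finsupp.prod_single_index, pow_zero] using integral_eq

end ProbabilityMeasure

end SO

/-- For Haar-distributed `M` in `SO(n,ℝ)` and `4j ≤ n − 1`:
`E[Tr(M^{2j})] = 1` and `Var(Tr(M^{2j})) = 2j`. -/
theorem so_trace_2j_mean_variance (n j : ℕ) (hn : 0 < n) (hj : 0 < j)
    (h : 4 * j ≤ n - 1)
    (μ : Measure (SO n)) [IsProbabilityMeasure μ] [μ.IsHaarMeasure] :
    (∫ M, trSO M ((2 * j : ℕ) : ℤ) ∂μ = 1) ∧
      variance (fun M => trSO M ((2 * j : ℕ) : ℤ)) μ = 2 * j := by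
  have mean_eq_one : traceMean (n : ℝ) (2 * j) = 1 := by
    rw [traceMean_of_pos _ (by omega), if_pos (even_two_mul j)]
  have first_moment : ∫ M : SO n, trSO M ((2 * j : ℕ) : ℤ) ∂μ = 1 := by
    simpa only [pow_one, gaussianMoment, mean_eq_one] using
      SO.integral_trSO_pow (μ := μ) (l := 2 * j) (m := 1) (by omega)
  have second_moment : ∫ M : SO n, trSO M ((2 * j : ℕ) : ℤ) ^ 2 ∂μ = 1 + 2 * j := by
    rw [SO.integral_trSO_pow (by omega), mean_eq_one]
    simp [gaussianMoment]
  refine ⟨first_moment, ?_⟩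
  rw [variance_eq_sub (SO.memLp_trSO (2 * j) 2)]
  simp only [Pi.pow_apply, first_moment, second_moment]
  ring
end

section
/- Let n and j be positive integers with 4j ≤ n, and let M be distributed according to the Haar probability measure on U(n,ℂ). Then E[Tr(M^{2j}) + conj(Tr(M^{2j}))] = 0 and E[(Tr(M^{2j}) + conj(Tr(M^{2j})))²] = 4j. -/
open MeasureTheory ProbabilityTheory Matrix

/-- The trace of the `k`-th power (`k : ℤ`, negative powers via the inverse) of an
element of the unitary group `U(n,ℂ)`. -/
noncomputable def trU {n : ℕ} (M : Matrix.unitaryGroup (Fin n) ℂ) (k : ℤ) : ℂ :=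
  Matrix.trace (((M ^ k : Matrix.unitaryGroup (Fin n) ℂ)) : Matrix (Fin n) (Fin n) ℂ)

/-!
Haar measure is invariant under `u ↦ exp(ita) u` for self-adjoint `a`, so derivatives of functions
along these flows integrate to zero; summing over a basis of matrices shows that the divergence of
any vector field `u ↦ Y(u) u` on the unitary group integrates to zero. For
`Y(u) = ∏_{c ∈ s} tr(u⁻ᶜ) · tr(uᵏ) · u⁻ᵃ` this is a linear equation (a loop equation) between the
moments `E[∏_{c ∈ s} tr(u⁻ᶜ) · tr(uᵏ)]`, in which the unknown indexed by `a ::ₘ s` has coefficient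
`n`, while the other coefficients have total weight `k - 1`. For `k ≤ n` the system is therefore
diagonally dominant, so it determines the moments, and they are those of its evident solution:
`k` if `s = {k}`, and `0` for the other partitions `s` of `k`. Hence `E|tr(uᵏ)|² = k`, while
`E[tr(uᵏ)]` and `E[tr(uᵏ)²]` vanish by invariance of the measure under scalars.
-/

open scoped ComplexStarModule

section Integrability

theorem integrable_of_continuous {X E : Type*} [TopologicalSpace X] [CompactSpace X]
    [MeasurableSpace X] [OpensMeasurableSpace X] [NormedAddCommGroup E]
    (μ : Measure X) [IsFiniteMeasure μ] {f : X → E} (hf : Continuous f) : Integrable f μ :=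
  hf.integrable_of_hasCompactSupport (.of_compactSpace f)

variable {X E κ : Type*} [MeasurableSpace X] [NormedAddCommGroup E] [NormedSpace ℝ E]
  {μ : Measure X} {f : κ → X → E}

theorem integrable_multiset_sum_map (s : Multiset κ) (hf : ∀ c, Integrable (f c) μ) :
    Integrable (fun x => (s.map (f · x)).sum) μ := by
  classical
  simp only [Finset.sum_multiset_map_count, ← Nat.cast_smul_eq_nsmul ℝ]
  exact integrable_finsetSum _ fun c _ => (hf c).smul (s.count c : ℝ)

theorem integral_multiset_sum_map (s : Multiset κ) (hf : ∀ c, Integrable (f c) μ) :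
    ∫ x, (s.map (f · x)).sum ∂μ = (s.map fun c => ∫ x, f c x ∂μ).sum := by
  classical
  simp only [Finset.sum_multiset_map_count, ← Nat.cast_smul_eq_nsmul ℝ, ← integral_smul]
  exact integral_finsetSum _ fun c _ => (hf c).smul (s.count c : ℝ)

end Integrability

section LieDerivative

variable {A : Type*} [NormedRing A] [NormedAlgebra ℂ A] [CompleteSpace A] [StarRing A]
  [ContinuousStar A] [StarModule ℂ A]
  {E E' : Type*} [NormedAddCommGroup E] [NormedSpace ℂ E] [NormedAddCommGroup E']
  [NormedSpace ℂ E']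

/-- `F` is continuously differentiable along the flows `u ↦ exp(ita) u` with `a` self-adjoint, and
`F' u X` is its derivative at `u` in the tangent direction `X * u`. The tangent directions are those
with `X = i a`; since these span `A` over `ℂ`, the derivative is recorded as a `ℂ`-linear map on all
of `A`. -/
structure HasLieDeriv (F : unitary A → E) (F' : unitary A → A →ₗ[ℂ] E) : Prop where
  continuous : Continuous F
  continuous_deriv (X : A) : Continuous fun u => F' u X
  hasDerivAt_zero (a : selfAdjoint A) (u : unitary A) :
    HasDerivAt (fun t : ℝ => F (selfAdjoint.expUnitary (t • a) * u)) (F' u (Complex.I • (a : A))) 0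

theorem hasLieDeriv_const (x : E) : HasLieDeriv (fun _ : unitary A => x) (fun _ => 0) where
  continuous := continuous_const
  continuous_deriv _ := continuous_const
  hasDerivAt_zero _ _ := hasDerivAt_const _ _

namespace HasLieDeriv

variable {F : unitary A → E} {F' : unitary A → A →ₗ[ℂ] E}

theorem hasDerivAt (hF : HasLieDeriv F F') (a : selfAdjoint A) (u : unitary A) (t : ℝ) :
    HasDerivAt (fun t : ℝ => F (selfAdjoint.expUnitary (t • a) * u))
      (F' (selfAdjoint.expUnitary (t • a) * u) (Complex.I • (a : A))) t := by
  have flow_add (s : ℝ) : selfAdjoint.expUnitary (s • a) * u =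
      selfAdjoint.expUnitary ((s - t) • a) * (selfAdjoint.expUnitary (t • a) * u) := by
    rw [← mul_assoc, ← Commute.expUnitary_add, ← add_smul, sub_add_cancel]
    exact ((Commute.refl (a : A)).smul_left _).smul_right _
  rw [funext fun s => congrArg F (flow_add s)]
  exact HasDerivAt.comp_sub_const
    (f := fun s => F (selfAdjoint.expUnitary (s • a) * (selfAdjoint.expUnitary (t • a) * u))) t t
    (by simpa using hF.hasDerivAt_zero a (selfAdjoint.expUnitary (t • a) * u))

section Integral

variable [CompactSpace (unitary A)] [MeasurableSpace (unitary A)] [BorelSpace (unitary A)]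
  (μ : Measure (unitary A)) [IsFiniteMeasure μ] [μ.IsMulLeftInvariant]

theorem integral_I_smul_eq_zero (hF : HasLieDeriv F F') (a : selfAdjoint A) :
    ∫ u, F' u (Complex.I • (a : A)) ∂μ = 0 := by
  set X : A := Complex.I • (a : A)
  obtain ⟨C, hC⟩ :=
    isCompact_univ.exists_bound_of_continuousOn (hF.continuous_deriv X).continuousOn
  have hderiv := (hasDerivAt_integral_of_dominated_loc_of_deriv_le (μ := μ) (x₀ := (0 : ℝ))
    (F := fun t u => F (selfAdjoint.expUnitary (t • a) * u))
    (F' := fun t u => F' (selfAdjoint.expUnitary (t • a) * u) X)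
    (bound := fun _ => C) Filter.univ_mem
    (.of_forall fun t =>
      (integrable_of_continuous μ (hF.continuous.comp (by fun_prop))).aestronglyMeasurable)
    (integrable_of_continuous μ (hF.continuous.comp (by fun_prop)))
    (integrable_of_continuous μ ((hF.continuous_deriv X).comp (by fun_prop))).aestronglyMeasurable
    (.of_forall fun u t _ => hC _ (Set.mem_univ _)) (integrable_const C)
    (.of_forall fun u t _ => hF.hasDerivAt a u t)).2
  simp only [integral_mul_left_eq_self (fun u => F u)] at hderiv
  simpa using hderiv.unique (hasDerivAt_const _ _)

theorem integral_eq_zero (hF : HasLieDeriv F F') (X : A) : ∫ u, F' u X ∂μ = 0 := by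
  have integrable (Y : A) : Integrable (fun u => F' u Y) μ :=
    integrable_of_continuous μ (hF.continuous_deriv Y)
  have of_selfAdjoint (a : selfAdjoint A) : ∫ u, F' u (a : A) ∂μ = 0 := by
    have h := hF.integral_I_smul_eq_zero μ a
    simp only [map_smul, integral_smul] at h
    exact (smul_eq_zero.1 h).resolve_left Complex.I_ne_zero
  rw [← realPart_add_I_smul_imaginaryPart X]
  simp only [map_add]
  rw [integral_add (integrable _) (integrable _)]
  simp only [map_smul, integral_smul, of_selfAdjoint, smul_zero, add_zero]

end Integral

theorem clm_comp (L : E →L[ℂ] E') (hF : HasLieDeriv F F') :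
    HasLieDeriv (fun u => L (F u)) (fun u => (L : E →ₗ[ℂ] E') ∘ₗ F' u) where
  continuous := L.continuous.comp hF.continuous
  continuous_deriv X := L.continuous.comp (hF.continuous_deriv X)
  hasDerivAt_zero a u :=
    (L.restrictScalars ℝ).hasFDerivAt.comp_hasDerivAt 0 (hF.hasDerivAt_zero a u)

/-- The trace of `Y' u` is the divergence at `u` of the vector field `u ↦ Y u * u`. -/
theorem integral_trace_eq_zero [FiniteDimensional ℂ A]
    [CompactSpace (unitary A)] [MeasurableSpace (unitary A)] [BorelSpace (unitary A)]
    (μ : Measure (unitary A)) [IsFiniteMeasure μ] [μ.IsMulLeftInvariant]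
    {Y : unitary A → A} {Y' : unitary A → A →ₗ[ℂ] A} (hY : HasLieDeriv Y Y') :
    ∫ u, LinearMap.trace ℂ A (Y' u) ∂μ = 0 := by
  let b := Module.finBasis ℂ A
  have hcoord (i) : HasLieDeriv (fun u => b.coord i (Y u)) (fun u => b.coord i ∘ₗ Y' u) :=
    hY.clm_comp (b.coord i).toContinuousLinearMap
  calc ∫ u, LinearMap.trace ℂ A (Y' u) ∂μ
      = ∫ u, ∑ i, (b.coord i ∘ₗ Y' u) (b i) ∂μ := by
        simp [LinearMap.trace_eq_matrix_trace ℂ b, Matrix.trace, LinearMap.toMatrix_apply]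
    _ = ∑ i, ∫ u, (b.coord i ∘ₗ Y' u) (b i) ∂μ :=
        integral_finsetSum _ fun i _ => integrable_of_continuous μ ((hcoord i).continuous_deriv _)
    _ = 0 := Finset.sum_eq_zero fun i _ => (hcoord i).integral_eq_zero μ (b i)

theorem smul {g : unitary A → ℂ} {g' : unitary A → A →ₗ[ℂ] ℂ} (hg : HasLieDeriv g g')
    (hF : HasLieDeriv F F') :
    HasLieDeriv (fun u => g u • F u) (fun u => g u • F' u + (g' u).smulRight (F u)) where
  continuous := hg.continuous.smul hF.continuous
  continuous_deriv X :=
    (hg.continuous.smul (hF.continuous_deriv X)).add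
      ((hg.continuous_deriv X).smul hF.continuous)
  hasDerivAt_zero a u := by
    simpa [mul_smul, smul_comm (g u), Pi.smul_def'] using
      (hg.hasDerivAt_zero a u).smul (hF.hasDerivAt_zero a u)

theorem multiset_prod {κ : Type*} [DecidableEq κ] {g : κ → unitary A → ℂ}
    {g' : κ → unitary A → A →ₗ[ℂ] ℂ} (s : Multiset κ) (hg : ∀ c, HasLieDeriv (g c) (g' c)) :
    HasLieDeriv (fun u => (s.map (g · u)).prod)
      (fun u => (s.map fun c => ((s.erase c).map (g · u)).prod • g' c u).sum) := by
  induction s using Multiset.induction with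
  | empty =>
    simpa using hasLieDeriv_const (1 : ℂ)
  | cons c s ih =>
    convert (hg c).smul ih using 1
    · simp
    · ext u X
      have erase_cons : ∀ e ∈ s, (((c ::ₘ s).erase e).map (g · u)).prod • g' e u =
          g c u • ((s.erase e).map (g · u)).prod • g' e u := fun e he => by
        rw [Multiset.erase_cons_tail_of_mem he, Multiset.map_cons, Multiset.prod_cons, mul_smul]
      simp [Multiset.map_congr rfl erase_cons, Multiset.smul_sum, add_comm, mul_comm]

theorem pow {B : Type*} [NormedRing B] [NormedAlgebra ℂ B] {F : unitary A → B}
    {F' : unitary A → A →ₗ[ℂ] B} (hF : HasLieDeriv F F') (k : ℕ) :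
    HasLieDeriv (fun u => F u ^ k) (fun u =>
      ∑ i ∈ Finset.range k, LinearMap.mulLeftRight ℂ (F u ^ (k - 1 - i), F u ^ i) ∘ₗ F' u) where
  continuous := hF.continuous.pow k
  continuous_deriv X := by
    have := hF.continuous
    have := hF.continuous_deriv X
    simp only [LinearMap.sum_apply, LinearMap.comp_apply, LinearMap.mulLeftRight_apply]
    fun_prop
  hasDerivAt_zero a u := by
    simpa [Finset.smul_sum] using (hF.hasDerivAt_zero a u).fun_pow' k

end HasLieDeriv

theorem hasDerivAt_expUnitary (a : selfAdjoint A) :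
    HasDerivAt (fun t : ℝ => (selfAdjoint.expUnitary (t • a) : A)) (Complex.I • (a : A)) 0 := by
  simpa [smul_comm Complex.I] using hasDerivAt_exp_smul_const (𝕂 := ℝ) (Complex.I • (a : A)) 0

theorem hasLieDeriv_coe : HasLieDeriv (fun u : unitary A => (u : A))
    (fun u => LinearMap.mulRight ℂ (u : A)) where
  continuous := continuous_subtype_val
  continuous_deriv X := by simp only [LinearMap.mulRight_apply]; fun_prop
  hasDerivAt_zero a u := (hasDerivAt_expUnitary a).mul_const (u : A)

theorem hasLieDeriv_star_coe : HasLieDeriv (fun u : unitary A => star (u : A))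
    (fun u => -LinearMap.mulLeft ℂ (star (u : A))) where
  continuous := by fun_prop
  continuous_deriv X := by
    simp only [LinearMap.neg_apply, LinearMap.mulLeft_apply]; fun_prop
  hasDerivAt_zero a u := by
    simpa using (hasDerivAt_expUnitary a).star.const_mul (star (u : A))

end LieDerivative

section CutJoin

/-- The cut-and-join sum of a function `f` on multisets, with `a` as the distinguished part of
`a ::ₘ s`: that part is either cut into two positive parts or joined to another part `c`, the latter
with weight `c`. The cuts are ordered, so `(a - i, i)` and `(i, a - i)` both contribute. -/
def cutJoin {E : Type*} [AddCommMonoid E] (f : Multiset ℕ → E) (a : ℕ) (s : Multiset ℕ) : E :=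
  ∑ i ∈ Finset.Ioo 0 a, f ((a - i) ::ₘ i ::ₘ s) +
    (s.map fun c => c • f ((a + c) ::ₘ s.erase c)).sum

theorem cutJoin_sub {E : Type*} [AddCommGroup E] (f g : Multiset ℕ → E) (a : ℕ)
    (s : Multiset ℕ) : cutJoin (f - g) a s = cutJoin f a s - cutJoin g a s := by
  simp only [cutJoin, Pi.sub_apply, smul_sub, Finset.sum_sub_distrib, Multiset.sum_map_sub]
  abel

section Integral

variable {X E : Type*} [MeasurableSpace X] {μ : Measure X} [NormedAddCommGroup E]
  [NormedSpace ℝ E] {f : Multiset ℕ → X → E}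

theorem integrable_cutJoin (hf : ∀ t, Integrable (f t) μ) (a : ℕ) (s : Multiset ℕ) :
    Integrable (fun x => cutJoin (f · x) a s) μ := by
  simp only [cutJoin, ← Nat.cast_smul_eq_nsmul ℝ]
  exact (integrable_finsetSum _ fun i _ => hf _).add
    (integrable_multiset_sum_map s fun c => (hf _).smul (c : ℝ))

theorem integral_cutJoin (hf : ∀ t, Integrable (f t) μ) (a : ℕ) (s : Multiset ℕ) :
    ∫ x, cutJoin (f · x) a s ∂μ = cutJoin (fun t => ∫ x, f t x ∂μ) a s := by
  simp only [cutJoin, ← Nat.cast_smul_eq_nsmul ℝ, ← integral_smul]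
  have hcut (i) : Integrable (f ((a - i) ::ₘ i ::ₘ s)) μ := hf _
  have hjoin (c : ℕ) : Integrable (fun x => (c : ℝ) • f ((a + c) ::ₘ s.erase c) x) μ :=
    (hf _).smul (c : ℝ)
  rw [integral_add (integrable_finsetSum _ fun i _ => hcut i) (integrable_multiset_sum_map s hjoin),
    integral_finsetSum _ fun i _ => hcut i, integral_multiset_sum_map s hjoin]

end Integral

variable {E : Type*} [NormedAddCommGroup E] {f : Multiset ℕ → E}
  {a k N : ℕ} {s : Multiset ℕ}

theorem norm_cutJoin_le {C : ℝ} (hf : ∀ t : Multiset ℕ, 0 ∉ t → t.sum = k → ‖f t‖ ≤ C)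
    (ha : 0 < a) (hs : 0 ∉ s) (hk : a + s.sum = k) : ‖cutJoin f a s‖ ≤ (k - 1) * C := by
  have cut_le : ‖∑ i ∈ Finset.Ioo 0 a, f ((a - i) ::ₘ i ::ₘ s)‖ ≤ (a - 1) * C := by
    refine (norm_sum_le_of_le _ (f := fun i => f ((a - i) ::ₘ i ::ₘ s))
      fun i hi => hf _ ?_ ?_).trans_eq ?_
    · have := Finset.mem_Ioo.1 hi
      simp only [Multiset.mem_cons, not_or]
      exact ⟨by omega, by omega, hs⟩
    · have := Finset.mem_Ioo.1 hi
      simp only [Multiset.sum_cons]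
      omega
    · simp [Nat.cast_sub (Nat.succ_le_of_lt ha)]
  have join_term_le : ∀ c ∈ s, ‖c • f ((a + c) ::ₘ s.erase c)‖ ≤ c * C := fun c hc => by
    refine norm_nsmul_le.trans (mul_le_mul_of_nonneg_left (hf _ ?_ ?_) c.cast_nonneg)
    · simp only [Multiset.mem_cons, not_or]
      exact ⟨by omega, fun h => hs (Multiset.mem_of_mem_erase h)⟩
    · have := Multiset.sum_erase hc
      simp only [Multiset.sum_cons]
      omega
  have join_le : ‖(s.map fun c => c • f ((a + c) ::ₘ s.erase c)).sum‖ ≤ s.sum * C := by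
    refine (norm_multiset_sum_le _).trans ?_
    rw [Multiset.map_map, Nat.cast_multiset_sum, ← Multiset.sum_map_mul_right]
    exact Multiset.sum_map_le_sum_map _ _ join_term_le
  calc ‖cutJoin f a s‖ ≤ (a - 1) * C + s.sum * C :=
        (norm_add_le _ _).trans (add_le_add cut_le join_le)
    _ = (k - 1) * C := by rw [← hk]; push_cast; ring

/-- Diagonal dominance: at a partition maximizing `‖f‖`, the diagonal weight `N` exceeds the total
weight `k - 1` of the cut-and-join sum. -/
theorem eq_zero_of_nsmul_add_cutJoin_eq_zero [NormedSpace ℝ E] (hk : 0 < k) (hkN : k ≤ N)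
    (hf : ∀ a s, 0 < a → 0 ∉ s → a + s.sum = k → N • f (a ::ₘ s) + cutJoin f a s = 0)
    (hs : 0 ∉ s) (hsk : s.sum = k) : f s = 0 := by
  obtain ⟨p, hp⟩ := Finite.exists_max fun p : k.Partition => ‖f p.parts‖
  have le_max (t : Multiset ℕ) (ht : 0 ∉ t) (htk : t.sum = k) : ‖f t‖ ≤ ‖f p.parts‖ :=
    hp ⟨t, fun hi => Nat.pos_of_ne_zero fun h => ht (h ▸ hi), htk⟩
  have zero_notMem : 0 ∉ p.parts := fun h => (p.parts_pos h).ne' rfl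
  obtain ⟨a, t, hat⟩ : ∃ a t, p.parts = a ::ₘ t := by
    obtain ⟨a, ha⟩ := Multiset.exists_mem_of_ne_zero (s := p.parts) fun h => by
      have := p.parts_sum
      simp_all
    exact ⟨a, _, (Multiset.cons_erase ha).symm⟩
  rw [hat] at le_max zero_notMem
  have hatk : a + t.sum = k := by simpa [hat] using p.parts_sum
  simp only [Multiset.mem_cons, not_or] at zero_notMem
  have ha := Nat.pos_of_ne_zero (Ne.symm zero_notMem.1)
  have dominated : N * ‖f (a ::ₘ t)‖ ≤ (k - 1) * ‖f (a ::ₘ t)‖ := by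
    rw [← nsmul_eq_mul, ← RCLike.norm_nsmul ℝ,
      eq_neg_of_add_eq_zero_left (hf a t ha zero_notMem.2 hatk), norm_neg]
    exact norm_cutJoin_le le_max ha zero_notMem.2 hatk
  have max_eq_zero : ‖f (a ::ₘ t)‖ ≤ 0 := by
    have : (k : ℝ) ≤ N := by exact_mod_cast hkN
    have := mul_le_mul_of_nonneg_right this (norm_nonneg (f (a ::ₘ t)))
    linarith
  exact norm_le_zero_iff.1 ((le_max s hs hsk).trans max_eq_zero)

/-- The value at the multiset `s` of the solution of the loop equations, in which only the
one-part multisets `{k}` contribute, with value `k`. -/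
def singlePartMoment (s : Multiset ℕ) : ℂ := if s.card = 1 then (s.sum : ℂ) else 0

theorem singlePartMoment_singleton (k : ℕ) : singlePartMoment {k} = k := by
  simp [singlePartMoment]

theorem singlePartMoment_of_card_ne_one {s : Multiset ℕ} (hs : s.card ≠ 1) :
    singlePartMoment s = 0 :=
  if_neg hs

theorem cutJoin_singlePartMoment (a : ℕ) (s : Multiset ℕ) :
    cutJoin singlePartMoment a s = (a + s.sum) * singlePartMoment s := by
  have cut_eq_zero (i : ℕ) : singlePartMoment ((a - i) ::ₘ i ::ₘ s) = 0 :=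
    singlePartMoment_of_card_ne_one (by simp)
  simp only [cutJoin, cut_eq_zero, Finset.sum_const_zero, zero_add]
  by_cases hs : s.card = 1
  · obtain ⟨b, rfl⟩ := Multiset.card_eq_one.1 hs
    simp [singlePartMoment_singleton, mul_comm]
  · have join_eq_zero : ∀ c ∈ s, c • singlePartMoment ((a + c) ::ₘ s.erase c) = 0 :=
      fun c hc => by
        rw [singlePartMoment_of_card_ne_one, smul_zero]
        rwa [Multiset.card_cons, Multiset.card_erase_add_one hc]
    rw [Multiset.map_congr rfl join_eq_zero, singlePartMoment_of_card_ne_one hs]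
    simp

end CutJoin

section MatrixTraces

variable {ι R : Type*} [Fintype ι] [CommRing R]

theorem trace_mulLeftRight (P Q : Matrix ι ι R) :
    LinearMap.trace R _ (LinearMap.mulLeftRight R (P, Q)) = trace P * trace Q := by
  classical
  have repr_apply (X : Matrix ι ι R) (p : ι × ι) : (stdBasis R ι ι).repr X p = X p.1 p.2 := by
    simp [stdBasis]
  have diag_eq (p : ι × ι) : LinearMap.toMatrix (stdBasis R ι ι) (stdBasis R ι ι)
      (LinearMap.mulLeftRight R (P, Q)) p p = P p.1 p.1 * Q p.2 p.2 := by
    rw [LinearMap.toMatrix_apply, repr_apply, stdBasis_eq_single, LinearMap.mulLeftRight_apply,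
      mul_apply]
    simp [mul_apply, single_apply, ite_and]
  rw [LinearMap.trace_eq_matrix_trace R (stdBasis R ι ι)]
  simp only [trace, diag_apply, diag_eq, Fintype.sum_prod_type, Finset.sum_mul_sum]

variable [DecidableEq ι]

theorem trace_sum_mulLeftRight_pow_comp_mulLeft (B : Matrix ι ι R) (m : ℕ) :
    LinearMap.trace R _ (∑ i ∈ Finset.range m,
      LinearMap.mulLeftRight R (B ^ (m - 1 - i), B ^ i) ∘ₗ LinearMap.mulLeft R B) =
      ∑ i ∈ Finset.range m, trace (B ^ (m - i)) * trace (B ^ i) := by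
  rw [map_sum]
  refine Finset.sum_congr rfl fun i hi => ?_
  have hi : m - i = m - 1 - i + 1 := by have := Finset.mem_range.1 hi; omega
  rw [← trace_mulLeftRight, hi, pow_succ]
  congr 1
  refine LinearMap.ext fun X => ?_
  simp [mul_assoc]

/-- The power sum `p_s = ∏_{c ∈ s} p_c`, evaluated at the eigenvalues of `M`. -/
def powerSum (s : Multiset ℕ) (M : Matrix ι ι R) : R := (s.map fun c => trace (M ^ c)).prod

theorem powerSum_zero (M : Matrix ι ι R) : powerSum 0 M = 1 := rfl

theorem powerSum_cons (c : ℕ) (s : Multiset ℕ) (M : Matrix ι ι R) :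
    powerSum (c ::ₘ s) M = trace (M ^ c) * powerSum s M := by
  simp [powerSum]

theorem continuous_powerSum [TopologicalSpace R] [IsTopologicalSemiring R] (s : Multiset ℕ) :
    Continuous (powerSum s : Matrix ι ι R → R) := by
  induction s using Multiset.induction with
  | empty => exact continuous_const
  | cons c s ih => simp only [funext (powerSum_cons c s)]; fun_prop

end MatrixTraces

section UnitaryGroup

variable {ι 𝕜 : Type*} [Fintype ι] [DecidableEq ι]

instance matrixBorelSpace {m n α : Type*} [Countable m] [Countable n] [TopologicalSpace α]
    [SecondCountableTopology α] [MeasurableSpace α] [BorelSpace α] : BorelSpace (Matrix m n α) :=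
  inferInstanceAs (BorelSpace (m → n → α))

open scoped Matrix.Norms.L2Operator

instance compactSpace_unitaryGroup [RCLike 𝕜] : CompactSpace (unitaryGroup ι 𝕜) := by
  have : ProperSpace (Matrix ι ι 𝕜) := FiniteDimensional.proper 𝕜 _
  refine isCompact_iff_compactSpace.1 (Metric.isCompact_of_isClosed_isBounded isClosed_unitary
    (isBounded_iff_forall_norm_le.2 ⟨‖(1 : Matrix ι ι 𝕜)‖, fun u hu => ?_⟩))
  rw [← mul_one u, CStarRing.norm_mem_unitary_mul 1 hu]

end UnitaryGroup

section LoopEquation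

open scoped Matrix.Norms.L2Operator

variable {ι : Type*} [Fintype ι] [DecidableEq ι]

theorem HasLieDeriv.trace_pow {F : unitaryGroup ι ℂ → Matrix ι ι ℂ}
    {F' : unitaryGroup ι ℂ → Matrix ι ι ℂ →ₗ[ℂ] Matrix ι ι ℂ} (hF : HasLieDeriv F F') (k : ℕ) :
    HasLieDeriv (fun u => trace (F u ^ k)) (fun u =>
      k • traceLinearMap ι ℂ ℂ ∘ₗ LinearMap.mulLeft ℂ (F u ^ (k - 1)) ∘ₗ F' u) := by
  convert (hF.pow k).clm_comp (traceLinearMap ι ℂ ℂ).toContinuousLinearMap using 1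
  · rfl
  refine funext fun u => LinearMap.ext fun X => ?_
  have cyclic : ∀ i ∈ Finset.range k, trace (F u ^ (k - 1 - i) * F' u X * F u ^ i) =
      trace (F u ^ (k - 1) * F' u X) := fun i hi => by
    rw [trace_mul_comm, ← mul_assoc, ← pow_add, Nat.add_sub_cancel'
      (Nat.le_sub_one_of_lt (Finset.mem_range.1 hi))]
  simp [Finset.sum_congr rfl cyclic]

theorem hasLieDeriv_trace_coe_pow (k : ℕ) :
    HasLieDeriv (fun u : unitaryGroup ι ℂ => trace ((u : Matrix ι ι ℂ) ^ k))
      (fun u => k • traceLinearMap ι ℂ ℂ ∘ₗ LinearMap.mulLeft ℂ ((u : Matrix ι ι ℂ) ^ k)) := by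
  convert hasLieDeriv_coe.trace_pow k using 1
  refine funext fun u => LinearMap.ext fun X => ?_
  rcases k with _ | k
  · simp
  · simp [trace_mul_comm _ (u : Matrix ι ι ℂ), ← mul_assoc, ← pow_succ']

theorem hasLieDeriv_trace_star_coe_pow (k : ℕ) :
    HasLieDeriv (fun u : unitaryGroup ι ℂ => trace (star (u : Matrix ι ι ℂ) ^ k))
      (fun u =>
        -(k • traceLinearMap ι ℂ ℂ ∘ₗ LinearMap.mulLeft ℂ (star (u : Matrix ι ι ℂ) ^ k))) := by
  convert hasLieDeriv_star_coe.trace_pow k using 1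
  refine funext fun u => LinearMap.ext fun X => ?_
  rcases k with _ | k
  · simp
  · simp [pow_succ]

/-- The vector field used is `u ↦ g u • u⁻ᵐ * u`. -/
theorem HasLieDeriv.integral_sub_mul_sum_trace_eq_zero (μ : Measure (unitaryGroup ι ℂ))
    [IsFiniteMeasure μ] [μ.IsMulLeftInvariant] {g : unitaryGroup ι ℂ → ℂ}
    {g' : unitaryGroup ι ℂ → Matrix ι ι ℂ →ₗ[ℂ] ℂ} (hg : HasLieDeriv g g') (m : ℕ) :
    ∫ u, (g' u (star (u : Matrix ι ι ℂ) ^ m) - g u * ∑ i ∈ Finset.range m,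
      trace (star (u : Matrix ι ι ℂ) ^ (m - i)) * trace (star (u : Matrix ι ι ℂ) ^ i)) ∂μ = 0 := by
  have divergence := (hg.smul (hasLieDeriv_star_coe.pow m)).integral_trace_eq_zero μ
  simp only [map_add, map_smul, LinearMap.comp_neg, Finset.sum_neg_distrib, map_neg,
    trace_sum_mulLeftRight_pow_comp_mulLeft, LinearMap.trace_smulRight] at divergence
  simpa only [smul_eq_mul, mul_neg, neg_add_eq_sub] using divergence

/-- The function `u ↦ ∏_{c ∈ s} tr(u⁻ᶜ) · tr(uᵏ)`, with `u⁻¹` written as `star u`. -/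
def mixedTrace (s : Multiset ℕ) (k : ℕ) (u : unitaryGroup ι ℂ) : ℂ :=
  powerSum s (star (u : Matrix ι ι ℂ)) * trace ((u : Matrix ι ι ℂ) ^ k)

theorem continuous_mixedTrace (s : Multiset ℕ) (k : ℕ) :
    Continuous (mixedTrace s k : unitaryGroup ι ℂ → ℂ) := by
  have := continuous_powerSum (ι := ι) (R := ℂ) s
  unfold mixedTrace
  fun_prop

/-- The Lie derivative of `mixedTrace s k` in the sense of `HasLieDeriv`, by the product rule. -/
noncomputable def mixedTraceDeriv (s : Multiset ℕ) (k : ℕ) (u : unitaryGroup ι ℂ) :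
    Matrix ι ι ℂ →ₗ[ℂ] ℂ :=
  powerSum s (star (u : Matrix ι ι ℂ)) •
      (k • traceLinearMap ι ℂ ℂ ∘ₗ LinearMap.mulLeft ℂ ((u : Matrix ι ι ℂ) ^ k)) +
    (s.map fun c => powerSum (s.erase c) (star (u : Matrix ι ι ℂ)) •
      -(c • traceLinearMap ι ℂ ℂ ∘ₗ
        LinearMap.mulLeft ℂ (star (u : Matrix ι ι ℂ) ^ c))).sum.smulRight
      (trace ((u : Matrix ι ι ℂ) ^ k))

theorem hasLieDeriv_mixedTrace (s : Multiset ℕ) (k : ℕ) :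
    HasLieDeriv (mixedTrace s k : unitaryGroup ι ℂ → ℂ) (mixedTraceDeriv s k) :=
  (HasLieDeriv.multiset_prod s hasLieDeriv_trace_star_coe_pow).smul (hasLieDeriv_trace_coe_pow k)

theorem pow_mul_star_pow {A : Type*} [Monoid A] [StarMul A] (u : unitary A) {a k : ℕ}
    (hak : a ≤ k) : (u : A) ^ k * star (u : A) ^ a = (u : A) ^ (k - a) := by
  have commute : Commute (u : A) (star (u : A)) :=
    (Unitary.coe_mul_star_self u).trans (Unitary.coe_star_mul_self u).symm
  nth_rw 1 [← Nat.sub_add_cancel hak]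
  rw [pow_add, mul_assoc, ← commute.mul_pow, Unitary.mul_star_self_of_mem u.2, one_pow, mul_one]

theorem mixedTraceDeriv_star_pow {a k : ℕ} (hak : a ≤ k) (s : Multiset ℕ)
    (u : unitaryGroup ι ℂ) :
    mixedTraceDeriv s k u (star (u : Matrix ι ι ℂ) ^ a) = k • mixedTrace s (k - a) u -
      (s.map fun c => c • mixedTrace ((a + c) ::ₘ s.erase c) k u).sum := by
  set B := star (u : Matrix ι ι ℂ) with hB
  have deriv_factor (c : ℕ) : (powerSum (s.erase c) B •
      -(c • traceLinearMap ι ℂ ℂ ∘ₗ LinearMap.mulLeft ℂ (B ^ c))) (B ^ a) *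
        trace ((u : Matrix ι ι ℂ) ^ k) = -(c • mixedTrace ((a + c) ::ₘ s.erase c) k u) := by
    simp only [LinearMap.smul_apply, LinearMap.neg_apply, LinearMap.comp_apply,
      LinearMap.mulLeft_apply, traceLinearMap_apply, ← pow_add, add_comm c a, mixedTrace,
      powerSum_cons, ← hB, smul_eq_mul, nsmul_eq_mul]
    ring
  have deriv_prod := map_multiset_sum (LinearMap.applyₗ (R := ℂ) (M₂ := ℂ) (B ^ a))
    (s.map fun c => powerSum (s.erase c) B •
      -(c • traceLinearMap ι ℂ ℂ ∘ₗ LinearMap.mulLeft ℂ (B ^ c)))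
  simp only [LinearMap.applyₗ_apply_apply, Multiset.map_map, Function.comp_apply] at deriv_prod
  rw [mixedTraceDeriv, LinearMap.add_apply, LinearMap.smulRight_apply, deriv_prod, smul_eq_mul,
    ← Multiset.sum_map_mul_right]
  simp only [deriv_factor, Multiset.sum_map_neg, ← sub_eq_add_neg]
  simp only [LinearMap.smul_apply, LinearMap.comp_apply, LinearMap.mulLeft_apply,
    traceLinearMap_apply, mixedTrace, ← pow_mul_star_pow u hak, smul_eq_mul, nsmul_eq_mul]
  ring

theorem mixedTrace_mul_sum_trace {a k : ℕ} (ha : 0 < a) (s : Multiset ℕ) (u : unitaryGroup ι ℂ) :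
    mixedTrace s k u * ∑ i ∈ Finset.range a,
      trace (star (u : Matrix ι ι ℂ) ^ (a - i)) * trace (star (u : Matrix ι ι ℂ) ^ i) =
    Fintype.card ι • mixedTrace (a ::ₘ s) k u +
      ∑ i ∈ Finset.Ioo 0 a, mixedTrace ((a - i) ::ₘ i ::ₘ s) k u := by
  have range_eq : Finset.range a = insert 0 (Finset.Ioo 0 a) := by
    ext i
    simp only [Finset.mem_range, Finset.mem_insert, Finset.mem_Ioo]
    omega
  rw [range_eq, Finset.sum_insert (by simp), mul_add, Finset.mul_sum]
  simp only [mixedTrace, powerSum_cons, pow_zero, trace_one, tsub_zero, nsmul_eq_mul]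
  congr 1
  · ring
  · exact Finset.sum_congr rfl fun i _ => by ring

theorem mixedTraceDeriv_star_pow_sub {a k : ℕ} (ha : 0 < a) (hak : a ≤ k) (s : Multiset ℕ)
    (u : unitaryGroup ι ℂ) :
    mixedTraceDeriv s k u (star (u : Matrix ι ι ℂ) ^ a) -
        mixedTrace s k u * ∑ i ∈ Finset.range a,
          trace (star (u : Matrix ι ι ℂ) ^ (a - i)) * trace (star (u : Matrix ι ι ℂ) ^ i) =
      k • mixedTrace s (k - a) u -
        (Fintype.card ι • mixedTrace (a ::ₘ s) k u + cutJoin (mixedTrace · k u) a s) := by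
  rw [mixedTraceDeriv_star_pow hak, mixedTrace_mul_sum_trace ha, cutJoin]
  abel

/-- The moment `E[∏_{c ∈ s} tr(u⁻ᶜ) · tr(uᵏ)]`, the unknown of the loop equations. -/
noncomputable def mixedMoment (μ : Measure (unitaryGroup ι ℂ)) (s : Multiset ℕ) (k : ℕ) : ℂ :=
  ∫ u, mixedTrace s k u ∂μ

theorem mixedMoment_cons_add_cutJoin (μ : Measure (unitaryGroup ι ℂ)) [IsFiniteMeasure μ]
    [μ.IsMulLeftInvariant] {a k : ℕ} (ha : 0 < a) (hak : a ≤ k) (s : Multiset ℕ) :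
    Fintype.card ι • mixedMoment μ (a ::ₘ s) k + cutJoin (mixedMoment μ · k) a s =
      k • mixedMoment μ s (k - a) := by
  have integrable (t : Multiset ℕ) (l : ℕ) :
      Integrable (mixedTrace t l : unitaryGroup ι ℂ → ℂ) μ :=
    integrable_of_continuous μ (continuous_mixedTrace t l)
  have integrable_cons : Integrable (fun u => (Fintype.card ι : ℂ) * mixedTrace (a ::ₘ s) k u) μ :=
    (integrable _ _).const_mul _
  have integrable_join := integrable_cutJoin (fun t => integrable t k) a s
  have loop := (hasLieDeriv_mixedTrace s k).integral_sub_mul_sum_trace_eq_zero μ a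
  simp only [mixedTraceDeriv_star_pow_sub ha hak, nsmul_eq_mul] at loop
  rw [integral_sub ((integrable _ _).const_mul _) (integrable_cons.fun_add integrable_join),
    integral_add integrable_cons integrable_join, integral_const_mul,
    integral_const_mul, integral_cutJoin fun t => integrable t k] at loop
  simpa only [nsmul_eq_mul, mixedMoment] using (sub_eq_zero.1 loop).symm

theorem mixedMoment_zero_zero (μ : Measure (unitaryGroup ι ℂ)) [IsProbabilityMeasure μ] :
    mixedMoment μ 0 0 = Fintype.card ι := by
  simp [mixedMoment, mixedTrace, powerSum_zero]

theorem mixedMoment_eq_singlePartMoment (μ : Measure (unitaryGroup ι ℂ)) [IsProbabilityMeasure μ]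
    [μ.IsMulLeftInvariant] {k : ℕ} (hk : 0 < k) (hkn : k ≤ Fintype.card ι) {s : Multiset ℕ}
    (hs : 0 ∉ s) (hsk : s.sum = k) : mixedMoment μ s k = singlePartMoment s := by
  induction k using Nat.strong_induction_on generalizing s with
  | _ k ih =>
  refine sub_eq_zero.1 (eq_zero_of_nsmul_add_cutJoin_eq_zero hk hkn
    (f := (mixedMoment μ · k) - singlePartMoment) (fun a t ha ht hat => ?_) hs hsk)
  have source : k • mixedMoment μ t (k - a) =
      Fintype.card ι • singlePartMoment (a ::ₘ t) + (a + t.sum) * singlePartMoment t := by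
    rcases t.empty_or_exists_mem with rfl | ⟨c, hc⟩
    · obtain rfl : a = k := by simpa using hat
      simp [mixedMoment_zero_zero, singlePartMoment, mul_comm]
    · have t_ne : t ≠ 0 := by rintro rfl; simp at hc
      have pos : 0 < k - a := by
        have := Multiset.le_sum_of_mem hc
        have : c ≠ 0 := fun h => ht (h ▸ hc)
        omega
      rw [ih (k - a) (by omega) pos (by omega) ht (by omega)]
      simp [singlePartMoment, t_ne, ← hat]
  rw [cutJoin_sub, cutJoin_singlePartMoment, Pi.sub_apply, smul_sub, sub_add_sub_comm, sub_eq_zero,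
    mixedMoment_cons_add_cutJoin μ ha (by omega), source]

end LoopEquation

section Homogeneity

theorem exists_unitary_pow_eq_neg_one {d : ℕ} (hd : d ≠ 0) :
    ∃ z : unitary ℂ, (z : ℂ) ^ d = -1 := by
  obtain ⟨z, hz⟩ := IsAlgClosed.exists_pow_nat_eq (-1 : ℂ) (Nat.pos_of_ne_zero hd)
  have hnorm : ‖z‖ = 1 := by
    rw [← pow_eq_one_iff_of_nonneg (norm_nonneg z) hd, ← norm_pow, hz, norm_neg, norm_one]
  refine ⟨⟨z, ?_⟩, hz⟩
  simp [Unitary.mem_iff, Complex.conj_mul', Complex.mul_conj', hnorm]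

theorem integral_eq_zero_of_homogeneous {A E : Type*} [Ring A] [StarRing A] [Algebra ℂ A]
    [StarModule ℂ A] [MeasurableSpace (unitary A)] [MeasurableMul (unitary A)]
    [NormedAddCommGroup E] [NormedSpace ℂ E] (μ : Measure (unitary A)) [μ.IsMulLeftInvariant]
    {d : ℕ} (hd : d ≠ 0) {f : unitary A → E}
    (hf : ∀ (z : unitary ℂ) u, f (z • u) = (z : ℂ) ^ d • f u) :
    ∫ u, f u ∂μ = 0 := by
  obtain ⟨z, hz⟩ := exists_unitary_pow_eq_neg_one hd
  refine integral_eq_zero_of_mul_left_eq_neg (g := z • 1) fun u => ?_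
  have : z • (1 : unitary A) * u = z • u := Subtype.ext (smul_one_mul (z : ℂ) (u : A))
  rw [this, hf, hz, neg_one_smul]

end Homogeneity

section TraceMoments

open scoped Matrix.Norms.L2Operator

variable {ι : Type*} [Fintype ι] [DecidableEq ι]

theorem trace_smul_pow (z : unitary ℂ) (u : unitaryGroup ι ℂ) (k : ℕ) :
    trace (((z • u : unitaryGroup ι ℂ) : Matrix ι ι ℂ) ^ k) =
      (z : ℂ) ^ k * trace ((u : Matrix ι ι ℂ) ^ k) := by
  have smul_coe_pow : ((z • u : unitaryGroup ι ℂ) : Matrix ι ι ℂ) ^ k =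
      (z : ℂ) ^ k • (u : Matrix ι ι ℂ) ^ k := smul_pow (z : ℂ) (u : Matrix ι ι ℂ) k
  rw [smul_coe_pow, trace_smul, smul_eq_mul]

theorem integral_trace_pow_pow_eq_zero (μ : Measure (unitaryGroup ι ℂ)) [μ.IsMulLeftInvariant]
    {k m : ℕ} (hk : k ≠ 0) (hm : m ≠ 0) : ∫ u, trace ((u : Matrix ι ι ℂ) ^ k) ^ m ∂μ = 0 :=
  integral_eq_zero_of_homogeneous μ (mul_ne_zero hk hm) fun z u => by
    rw [trace_smul_pow, mul_pow, ← pow_mul, smul_eq_mul]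

theorem integral_trace_pow_mul_conj (μ : Measure (unitaryGroup ι ℂ)) [IsProbabilityMeasure μ]
    [μ.IsMulLeftInvariant] {k : ℕ} (hk : 0 < k) (hkn : k ≤ Fintype.card ι) :
    ∫ u, trace ((u : Matrix ι ι ℂ) ^ k) * starRingEnd ℂ (trace ((u : Matrix ι ι ℂ) ^ k)) ∂μ =
      k := by
  have conj_trace_pow (u : unitaryGroup ι ℂ) : starRingEnd ℂ (trace ((u : Matrix ι ι ℂ) ^ k)) =
      trace (star (u : Matrix ι ι ℂ) ^ k) := by
    rw [star_eq_conjTranspose, ← conjTranspose_pow, trace_conjTranspose, starRingEnd_apply]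
  calc ∫ u, trace ((u : Matrix ι ι ℂ) ^ k) * starRingEnd ℂ (trace ((u : Matrix ι ι ℂ) ^ k)) ∂μ
      = mixedMoment μ {k} k := by
        simp only [mixedMoment, mixedTrace, conj_trace_pow, powerSum, Multiset.map_singleton,
          Multiset.prod_singleton, mul_comm]
    _ = singlePartMoment {k} :=
        mixedMoment_eq_singlePartMoment μ hk hkn (by simpa using hk.ne) (by simp)
    _ = k := singlePartMoment_singleton k

theorem trU_natCast {n : ℕ} (M : unitaryGroup (Fin n) ℂ) (k : ℕ) :
    trU M k = trace ((M : Matrix (Fin n) (Fin n) ℂ) ^ k) := by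
  rw [trU, zpow_natCast, SubmonoidClass.coe_pow]

end TraceMoments

theorem u_trace_2j_mean_second_moment_general {n k : ℕ} (hk : 0 < k) (hkn : k ≤ n)
    (μ : Measure (Matrix.unitaryGroup (Fin n) ℂ)) [IsProbabilityMeasure μ]
    [μ.IsMulLeftInvariant] :
    (∫ M, (trU M k + (starRingEnd ℂ) (trU M k)) ∂μ = 0) ∧
      ∫ M, (trU M k + (starRingEnd ℂ) (trU M k)) ^ 2 ∂μ = 2 * k := by
  have integrable (m l : ℕ) :
      Integrable (fun M => trU M k ^ m * (starRingEnd ℂ) (trU M k) ^ l) μ :=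
    integrable_of_continuous μ (by simp only [trU_natCast]; fun_prop)
  have integral_pow {m : ℕ} (hm : m ≠ 0) : ∫ M, trU M k ^ m ∂μ = 0 := by
    simpa only [trU_natCast] using integral_trace_pow_pow_eq_zero μ hk.ne' hm
  have integral_conj_pow {m : ℕ} (hm : m ≠ 0) : ∫ M, (starRingEnd ℂ) (trU M k) ^ m ∂μ = 0 := by
    simp only [← map_pow, integral_conj, integral_pow hm, map_zero]
  have integral_mul_conj : ∫ M, trU M k * (starRingEnd ℂ) (trU M k) ∂μ = k := by
    simpa only [trU_natCast] using integral_trace_pow_mul_conj μ hk (by simpa using hkn)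
  constructor
  · rw [integral_add (by simpa using integrable 1 0) (by simpa using integrable 0 1)]
    simpa using congrArg₂ (· + ·) (integral_pow one_ne_zero) (integral_conj_pow one_ne_zero)
  · simp only [add_sq', mul_assoc]
    rw [integral_add (by simpa using (integrable 2 0).fun_add (integrable 0 2))
        (by simpa using (integrable 1 1).const_mul 2),
      integral_add (by simpa using integrable 2 0) (by simpa using integrable 0 2),
      integral_const_mul, integral_pow two_ne_zero, integral_conj_pow two_ne_zero,
      integral_mul_conj, zero_add, zero_add]

/-- For Haar-distributed `M` in `U(n,ℂ)` and `4j ≤ n`: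
`E[Tr(M^{2j}) + conj(Tr(M^{2j}))] = 0` and `E[(Tr(M^{2j}) + conj(Tr(M^{2j})))²] = 4j`. -/
theorem u_trace_2j_mean_second_moment (n j : ℕ) (hn : 0 < n) (hj : 0 < j)
    (h : 4 * j ≤ n)
    (μ : Measure (Matrix.unitaryGroup (Fin n) ℂ)) [IsProbabilityMeasure μ]
    [μ.IsHaarMeasure] :
    (∫ M, (trU M ((2 * j : ℕ) : ℤ) + (starRingEnd ℂ) (trU M ((2 * j : ℕ) : ℤ))) ∂μ = 0) ∧
      ∫ M, (trU M ((2 * j : ℕ) : ℤ) + (starRingEnd ℂ) (trU M ((2 * j : ℕ) : ℤ))) ^ 2 ∂μ =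
        4 * j := by
  have := u_trace_2j_mean_second_moment_general (n := n) (k := 2 * j) (by omega) (by omega) μ
  exact ⟨this.1, this.2.trans (by push_cast; ring)⟩
end
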